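/- Let Ω₁, …, Ωₘ ⊂ ℂ be bounded domains with (closure Ωᵢ)° = Ωᵢ, ℂ \ closure(Ωᵢ) connected, and a uniform bound M such that any two points of each Ωᵢ can be joined in Ωᵢ by a path of length at most M. Then for every f in A^∞(Ω₁ × ⋯ × Ωₘ), every n ∈ ℕ, and every ε > 0, there is a polynomial P(z₁,…,zₘ) with |∂^{α₁+⋯+αₘ}P/∂z₁^{α₁}⋯∂zₘ^{αₘ} − ∂^{α₁+⋯+αₘ}f/∂z₁^{α₁}⋯∂zₘ^{αₘ}| < ε on closure(Ω₁) × ⋯ × closure(Ωₘ) for all 0 ≤ αᵢ ≤ n. -/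

import Mathlib

/-- Two points are joined in `Ω` by a path of length at most `M`. -/
def JoinedLe (Ω : Set ℂ) (M : ℝ) (z w : ℂ) : Prop :=
  ∃ γ : ℝ → ℂ, ContinuousOn γ (Set.Icc 0 1) ∧ γ 0 = z ∧ γ 1 = w ∧
    (∀ t ∈ Set.Icc (0:ℝ) 1, γ t ∈ Ω) ∧ eVariationOn γ (Set.Icc 0 1) ≤ ENNReal.ofReal M

/-- The partial derivative of `u : ℂᵐ → ℂ` with respect to the `i`-th variable. -/
noncomputable def partialDeriv {m : ℕ} (i : Fin m) (u : (Fin m → ℂ) → ℂ) :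
    (Fin m → ℂ) → ℂ :=
  fun z => deriv (fun w => u (Function.update z i w)) (z i)

/-- The mixed partial derivative of `u : ℂᵐ → ℂ` in the directions listed in `l`. -/
noncomputable def mixedDeriv {m : ℕ} (l : List (Fin m)) (u : (Fin m → ℂ) → ℂ) :
    (Fin m → ℂ) → ℂ :=
  l.foldr (fun i v => partialDeriv i v) u

namespace Merg
open Set Filter Topology

/-- `h` agrees on `K` with a uniform limit of polynomials. -/
def PolyLim (K : Set ℂ) [CompactSpace K] (h : ℂ → ℂ) : Prop :=
  ∃ u ∈ (polynomialFunctions K).topologicalClosure, ∀ z : K, u z = h z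

lemma PolyLim.approx {K : Set ℂ} [CompactSpace K] {h : ℂ → ℂ} (hh : PolyLim K h) {ε : ℝ}
    (hε : 0 < ε) : ∃ q : Polynomial ℂ, ∀ z ∈ K, ‖h z - q.eval z‖ < ε := by
  obtain ⟨u, hu, huh⟩ := hh
  have hu' : u ∈ closure ((polynomialFunctions K : Subalgebra ℂ C(K, ℂ)) : Set C(K, ℂ)) := hu
  obtain ⟨v, hv, huv⟩ := Metric.mem_closure_iff.1 hu' ε hε
  rw [polynomialFunctions_coe] at hv
  obtain ⟨q, rfl⟩ := hv
  refine ⟨q, fun z hz => ?_⟩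
  have := (ContinuousMap.dist_lt_iff hε).1 huv ⟨z, hz⟩
  rw [dist_eq_norm, huh] at this
  simpa using this

lemma PolyLim.mul {K : Set ℂ} [CompactSpace K] {h k : ℂ → ℂ} (hh : PolyLim K h) (hk : PolyLim K k) :
    PolyLim K (fun z => h z * k z) := by
  obtain ⟨u, hu, huh⟩ := hh
  obtain ⟨v, hv, hvk⟩ := hk
  exact ⟨u * v, mul_mem hu hv, fun z => by simp [huh, hvk]⟩

lemma PolyLim.add {K : Set ℂ} [CompactSpace K] {h k : ℂ → ℂ} (hh : PolyLim K h) (hk : PolyLim K k) :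
    PolyLim K (fun z => h z + k z) := by
  obtain ⟨u, hu, huh⟩ := hh
  obtain ⟨v, hv, hvk⟩ := hk
  exact ⟨u + v, add_mem hu hv, fun z => by simp [huh, hvk]⟩

lemma PolyLim.const {K : Set ℂ} [CompactSpace K] (c : ℂ) : PolyLim K (fun _ => c) :=
  ⟨algebraMap ℂ _ c, Subalgebra.algebraMap_mem _ c, fun z => by simp⟩

lemma PolyLim.id {K : Set ℂ} [CompactSpace K] : PolyLim K (fun z => z) := by
  refine ⟨Polynomial.toContinuousMapOnAlgHom K Polynomial.X, ?_, fun z => by simp⟩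
  apply Subalgebra.le_topologicalClosure
  exact ⟨Polynomial.X, by simp⟩

lemma PolyLim.prod {K : Set ℂ} [CompactSpace K] {ι : Type*} (s : Finset ι) {h : ι → ℂ → ℂ}
    (hh : ∀ i ∈ s, PolyLim K (h i)) : PolyLim K (fun z => ∏ i ∈ s, h i z) := by
  classical
  induction s using Finset.induction_on with
  | empty => simpa using PolyLim.const 1
  | insert a s ha ih =>
    simp only [Finset.prod_insert ha]
    exact (hh a (by simp)).mul (ih fun i hi => hh i (by simp [hi]))

lemma PolyLim.inv {K : Set ℂ} [CompactSpace K] (hK : IsPreconnected Kᶜ) {h : ℂ → ℂ}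
    (hh : PolyLim K h) (h0 : ∀ z ∈ K, h z ≠ 0) : PolyLim K (fun z => (h z)⁻¹) := by
  obtain ⟨u, hu, huh⟩ := hh
  let A := (polynomialFunctions K).topologicalClosure
  have hcl : IsClosed (A : Set C(K, ℂ)) := Subalgebra.isClosed_topologicalClosure _
  have : CompleteSpace A := hcl.completeSpace_coe
  let X : A := ⟨Polynomial.toContinuousMapOnAlgHom K Polynomial.X,
    Subalgebra.le_topologicalClosure _ ⟨Polynomial.X, by simp⟩⟩
  have hX : ∀ z : K, (X : C(K, ℂ)) z = z := fun z => by simp [X]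
  have hspec : spectrum ℂ (X : C(K, ℂ)) = K := by
    rw [ContinuousMap.spectrum_eq_range]
    ext z; constructor
    · rintro ⟨w, rfl⟩; rw [hX]; exact w.2
    · intro hz; exact ⟨⟨z, hz⟩, hX _⟩
  have hspecA : spectrum ℂ X = K := by
    refine (Subalgebra.spectrum_eq_of_isPreconnected_compl A X ?_).trans hspec
    have h3 : (spectrum ℂ (X : C(K, ℂ)))ᶜ = Kᶜ := congrArg compl hspec
    exact h3 ▸ hK
  have hunit : IsUnit (⟨u, hu⟩ : A) := by
    by_contra hnu
    obtain ⟨φ, hφ⟩ := WeakDual.CharacterSpace.exists_apply_eq_zero hnu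
    have hl : φ X ∈ K := by
      have h3 : φ X ∈ spectrum ℂ X := AlgHom.apply_mem_spectrum φ X
      exact hspecA.subset h3
    -- φ equals evaluation
    have key : ∀ a : A, φ a = (a : C(K, ℂ)) ⟨φ X, hl⟩ := by
      have hc : IsClosed {v : A | φ v = (v : C(K, ℂ)) ⟨φ X, hl⟩} := by
        apply isClosed_eq (map_continuous φ)
        exact (continuous_eval_const _).comp continuous_subtype_val
      have hd : ∀ q : Polynomial ℂ, φ (Polynomial.aeval X q) =
          ((Polynomial.aeval X q : A) : C(K, ℂ)) ⟨φ X, hl⟩ := by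
        intro q
        rw [← Polynomial.aeval_algHom_apply]
        have : ((Polynomial.aeval X q : A) : C(K, ℂ)) = Polynomial.aeval (X : C(K, ℂ)) q := by
          rw [← Subalgebra.coe_val, Polynomial.aeval_algHom_apply]
        rw [this, Polynomial.aeval_continuousMap_apply, hX]
        simp
      intro a
      have ha : (a : C(K, ℂ)) ∈ closure ((polynomialFunctions K : Subalgebra ℂ C(K, ℂ)) :
        Set C(K, ℂ)) := a.2
      have : a ∈ closure {v : A | φ v = (v : C(K, ℂ)) ⟨φ X, hl⟩} := by
        rw [Metric.mem_closure_iff] at ha ⊢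
        intro ε hε
        obtain ⟨v, hv, hav⟩ := ha ε hε
        rw [polynomialFunctions_coe] at hv
        obtain ⟨q, rfl⟩ := hv
        refine ⟨Polynomial.aeval X q, hd q, ?_⟩
        have : ((Polynomial.aeval X q : A) : C(K, ℂ)) = Polynomial.toContinuousMapOnAlgHom K q := by
          rw [← Subalgebra.coe_val, ← Polynomial.aeval_algHom_apply]
          ext z
          rw [Polynomial.aeval_continuousMap_apply]
          simp [X]
        rw [Subtype.dist_eq, this]
        exact hav
      rwa [hc.closure_eq] at this
    have := key ⟨u, hu⟩
    rw [hφ] at this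
    have h2 := huh ⟨φ X, hl⟩
    exact h0 _ hl (by rw [← h2]; exact this.symm)
  obtain ⟨v, hv⟩ := hunit.exists_right_inv
  refine ⟨v, v.2, fun z => ?_⟩
  have := congrArg (fun a : A => (a : C(K, ℂ)) z) hv
  simp only [Subalgebra.coe_mul, ContinuousMap.mul_apply, Subalgebra.coe_one,
    ContinuousMap.one_apply, huh] at this
  exact eq_inv_of_mul_eq_one_right this

lemma PolyLim.of_approx {K : Set ℂ} [CompactSpace K] {h : ℂ → ℂ} (hc : ContinuousOn h K)
    (H : ∀ ε > 0, ∃ k, PolyLim K k ∧ ∀ z ∈ K, ‖h z - k z‖ < ε) : PolyLim K h := by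
  refine ⟨⟨fun z => h z, hc.domRestrict⟩, ?_, fun z => rfl⟩
  have hcl : IsClosed ((polynomialFunctions K).topologicalClosure : Set C(K, ℂ)) :=
    Subalgebra.isClosed_topologicalClosure _
  change _ ∈ ((polynomialFunctions K).topologicalClosure : Set C(K, ℂ))
  rw [← hcl.closure_eq, Metric.mem_closure_iff]
  intro ε hε
  obtain ⟨k, ⟨u, hu, huk⟩, hk⟩ := H ε hε
  refine ⟨u, hu, (ContinuousMap.dist_lt_iff hε).2 fun z => ?_⟩
  rw [dist_eq_norm, huk]
  exact hk z z.2

/-- principal square root -/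
noncomputable def csq (x : ℂ) : ℂ := x ^ ((2 : ℕ) : ℂ)⁻¹

lemma csq_sq (x : ℂ) : csq x ^ 2 = x := Complex.cpow_nat_inv_pow x two_ne_zero

lemma slit_of_norm_lt {x : ℂ} (hx : ‖x‖ < 1) : 1 + x ∈ Complex.slitPlane := by
  left
  have := (Complex.abs_re_le_norm x)
  have := (abs_le.1 this).1
  simp; linarith

lemma continuousAt_csq {x : ℂ} (hx : x ∈ Complex.slitPlane) : ContinuousAt csq x :=
  continuousAt_id.cpow continuousAt_const hx

lemma PolyLim.sqrt {K : Set ℂ} [CompactSpace K] {x : ℂ → ℂ} (hh : PolyLim K x) {ρ : ℝ} (hρ : ρ < 1)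
    (hx : ∀ z ∈ K, ‖x z‖ ≤ ρ) : PolyLim K (fun z => csq (1 + x z)) := by
  have hxc : ContinuousOn x K := by
    obtain ⟨u, hu, huh⟩ := hh
    rw [continuousOn_iff_continuous_domRestrict]
    exact u.continuous.congr (fun z => huh z)
  rcases K.eq_empty_or_nonempty with rfl | ⟨z0, hz0⟩
  · exact ⟨0, zero_mem _, fun z => absurd z.2 (Set.notMem_empty _)⟩
  have hρ0 : 0 ≤ ρ := (norm_nonneg _).trans (hx z0 hz0)
  refine PolyLim.of_approx ?_ ?_
  · intro z hz
    have := (continuousAt_csq (slit_of_norm_lt ((hx z hz).trans_lt hρ)))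
    exact ContinuousAt.comp_continuousWithinAt (f := fun z => 1 + x z) this
      (continuousWithinAt_const.add (hxc z hz))
  · intro ε hε
    obtain ⟨R, hR1, hR2⟩ := exists_between hρ
    obtain ⟨R', hR'1, hR'2⟩ := exists_between hR1
    lift R to NNReal using hρ0.trans hR1.le
    lift R' to NNReal using hρ0.trans hR'1.le
    have hd : DifferentiableOn ℂ (fun y => csq (1 + y)) (Metric.closedBall 0 R) := by
      intro y hy
      have hy' : ‖y‖ < 1 := (mem_closedBall_zero_iff.1 hy).trans_lt hR2
      have : DifferentiableAt ℂ (fun y : ℂ => (1 + y) ^ ((2 : ℕ) : ℂ)⁻¹) y :=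
        (by fun_prop : DifferentiableAt ℂ (fun y : ℂ => 1 + y) y).cpow
          (differentiableAt_const _) (slit_of_norm_lt hy')
      exact this.differentiableWithinAt
    have hRpos : 0 < R := by exact_mod_cast lt_of_le_of_lt hρ0 hR1
    have hp := hd.hasFPowerSeriesOnBall hRpos
    have ht := hp.tendstoUniformlyOn' (r' := R') (by exact_mod_cast hR'2)
    rw [Metric.tendstoUniformlyOn_iff] at ht
    obtain ⟨n, hn⟩ := (ht ε hε).exists
    set p := cauchyPowerSeries (fun y => csq (1 + y)) 0 (R : ℝ)
    let q : Polynomial ℂ := ∑ k ∈ Finset.range n, Polynomial.monomial k (p.coeff k)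
    obtain ⟨u, hu, huh⟩ := hh
    refine ⟨fun z => q.eval (x z), ⟨Polynomial.aeval u q, ?_, ?_⟩, fun z hz => ?_⟩
    · have h4 := (Polynomial.aeval (⟨u, hu⟩ : (polynomialFunctions K).topologicalClosure) q).2
      rwa [← Subalgebra.coe_val, ← Polynomial.aeval_algHom_apply] at h4
    · intro z
      rw [Polynomial.aeval_continuousMap_apply, huh]
    · have := hn (x z) (by simpa using (hx z hz).trans_lt hR'1)
      rw [dist_eq_norm] at this
      have h5 : q.eval (x z) = p.partialSum n (x z - 0) := by
        simp only [q, FormalMultilinearSeries.partialSum, Polynomial.eval_finsetSum,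
          Polynomial.eval_monomial, sub_zero]
        refine Finset.sum_congr rfl fun k _ => ?_
        rw [FormalMultilinearSeries.apply_eq_pow_smul_coeff, smul_eq_mul, mul_comm]
      simp only [h5]
      exact this

end Merg

namespace Merg
open Set Filter Topology

lemma exists_chain {K : Set ℂ} (hKc : IsCompact K) (hK : IsConnected Kᶜ) {p : ℂ} (hp : p ∉ K)
    {r : ℝ} (hr : 0 < r) : ∃ (N : ℕ) (v : ℕ → ℂ), v 0 = p ∧ r / 2 ≤ ‖v N - p‖ ∧
      (∀ i ≤ N, ‖v i - p‖ ≤ r ∧ v i ∉ K) ∧ ∀ i < N, ‖v (i + 1) - v i‖ ≤ r ∧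
        ∀ z ∈ K, ‖v (i + 1) - v i‖ ≤ 1 / 2 * ‖z - v (i + 1)‖ := by
  have hpc := (hKc.isClosed.isOpen_compl.isConnected_iff_isPathConnected).1 hK
  -- far point
  obtain ⟨R, hR⟩ := hKc.isBounded.exists_norm_le
  let q : ℂ := ((max R 0 + ‖p‖ + r + 1 : ℝ) : ℂ)
  have hqn : ‖q‖ = max R 0 + ‖p‖ + r + 1 := by
    simp only [q]
    rw [Complex.norm_real, Real.norm_of_nonneg]; positivity
  have hqK : q ∉ K := fun h => by
    have := hR q h
    have := le_max_left R 0
    have := norm_nonneg p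
    linarith
  obtain ⟨γ, hγ⟩ := hpc.joinedIn p hp q hqK
  obtain ⟨d, hd, hdK⟩ : ∃ d > 0, ∀ t, ∀ z ∈ K, d ≤ ‖z - γ t‖ := by
    have hc : IsCompact (range γ) := isCompact_range γ.continuous
    have hdis : Disjoint (range γ) K := by
      rw [Set.disjoint_left]; rintro _ ⟨t, rfl⟩ h; exact hγ t h
    obtain ⟨d, hd, h⟩ := hdis.exists_cthickenings hc hKc.isClosed
    refine ⟨d, hd, fun t z hz => ?_⟩
    by_contra! hlt
    refine Set.disjoint_left.1 h (?_ : z ∈ _) (Metric.self_subset_cthickening _ hz)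
    exact Metric.mem_cthickening_of_dist_le z (γ t) d _ ⟨t, rfl⟩ (by rw [dist_eq_norm]; exact hlt.le)
  have huc : UniformContinuous γ := CompactSpace.uniformContinuous_of_continuous γ.continuous
  rw [Metric.uniformContinuous_iff] at huc
  obtain ⟨η, hη, hγη⟩ := huc (min (r / 2) (d / 2)) (by positivity)
  obtain ⟨n, hn⟩ := exists_nat_one_div_lt hη
  let T : ℕ → unitInterval := fun i => Set.projIcc 0 1 zero_le_one (i / (n + 1 : ℝ))
  let v : ℕ → ℂ := fun i => γ (T i)
  have hstep : ∀ i, ‖v (i + 1) - v i‖ < min (r / 2) (d / 2) := by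
    intro i
    rw [← dist_eq_norm]
    apply hγη
    refine lt_of_le_of_lt ?_ hn
    rw [Subtype.dist_eq, Real.dist_eq]
    refine (abs_projIcc_sub_projIcc zero_le_one).trans ?_
    rw [← sub_div]; push_cast
    rw [add_sub_cancel_left, abs_of_nonneg (by positivity)]
  have hv0 : v 0 = p := by simp [v, T]
  have hvn : v (n + 1) = q := by
    have : T (n + 1) = 1 := by
      simp only [T]
      push_cast
      rw [div_self (by positivity)]
      exact Set.projIcc_right _
    simp [v, this]
  have hex : ∃ i, r / 2 ≤ ‖v i - p‖ := ⟨n + 1, by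
    rw [hvn]
    have := norm_sub_norm_le q p
    have := le_max_right R 0
    linarith⟩
  classical
  refine ⟨Nat.find hex, v, hv0, Nat.find_spec hex, ?_, ?_⟩
  · intro i hi
    refine ⟨?_, hγ _⟩
    rcases i with _ | i
    · simp [hv0, hr.le]
    · have h1 := Nat.find_min hex (m := i) (by omega)
      have h2 := hstep i
      have h3 := min_le_left (r / 2) (d / 2)
      have : v (i + 1) - p = (v (i + 1) - v i) + (v i - p) := by ring
      rw [this]
      refine (norm_add_le _ _).trans ?_
      push Not at h1
      linarith
  · intro i hi
    have h2 := hstep i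
    have h3 := min_le_left (r / 2) (d / 2)
    refine ⟨by linarith, fun z hz => ?_⟩
    have h4 := min_le_right (r / 2) (d / 2)
    have := hdK (T (i + 1)) z hz
    change d ≤ ‖z - v (i + 1)‖ at this
    linarith

lemma factor_eq {z v w : ℂ} (h : z ≠ w) : (z - v) / (z - w) = 1 + (w - v) / (z - w) := by
  have : z - w ≠ 0 := sub_ne_zero.2 h
  field_simp; ring

lemma mergelyan_lemma {K : Set ℂ} [CompactSpace K] (hK : IsConnected Kᶜ) {p : ℂ} (hp : p ∉ K)
    {r : ℝ} (hr : 0 < r) : ∃ (m κ : ℂ) (h : ℂ → ℂ), PolyLim K h ∧ ‖m - p‖ ≤ r ∧ ‖κ‖ ≤ r ∧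
      ∀ z ∈ K, h z * (z - m) = 1 + κ ^ 2 * h z ^ 2 ∧ ‖h z‖ ≤ 300 / r ∧
        (4 * r ≤ ‖z - m‖ → ‖h z‖ ≤ 2 / ‖z - m‖) := by
  have hKc : IsCompact K := isCompact_iff_compactSpace.2 inferInstance
  obtain ⟨N, v, hv0, hvN, hv, hst⟩ := exists_chain hKc hK hp hr
  set b := v N with hb
  let s : ℂ → ℂ := fun z => ∏ i ∈ Finset.range N, csq ((z - v i) / (z - v (i + 1)))
  have hsP : PolyLim K s := by
    refine PolyLim.prod _ fun i hi => ?_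
    have hi' := Finset.mem_range.1 hi
    have hvi := (hv (i + 1) hi').2
    have hsub : PolyLim K (fun z => z + -v (i + 1)) := PolyLim.id.add (PolyLim.const _)
    have hinv := hsub.inv hK.isPreconnected (fun z hz h0 => hvi (by
      rw [← sub_eq_add_neg, sub_eq_zero] at h0; rwa [h0] at hz))
    have := ((PolyLim.const (K := K) (v (i + 1) - v i)).mul hinv).sqrt (ρ := 1 / 2) (by norm_num)
      (fun z hz => by
        rw [norm_mul, norm_inv, ← div_eq_mul_inv, ← sub_eq_add_neg]
        have h0 : 0 < ‖z - v (i + 1)‖ := norm_pos_iff.2 (sub_ne_zero.2 fun h => hvi (by rwa [← h]))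
        rw [div_le_iff₀ h0]
        exact (hst i hi').2 z hz)
    obtain ⟨u, hu, huh⟩ := this
    refine ⟨u, hu, fun z => ?_⟩
    have hne : (z : ℂ) ≠ v (i + 1) := fun h => hvi (by rw [← h]; exact z.2)
    rw [huh]
    beta_reduce
    rw [factor_eq hne, div_eq_mul_inv, sub_eq_add_neg (z : ℂ)]
  have hs2 : ∀ z, (∀ i ≤ N, z ≠ v i) → s z ^ 2 = (z - p) / (z - b) := by
    intro z hz
    simp only [s]
    rw [← Finset.prod_pow]
    simp only [csq_sq]
    have : ∀ n ≤ N, ∏ i ∈ Finset.range n, (z - v i) / (z - v (i + 1)) = (z - p) / (z - v n) := by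
      intro n
      induction n with
      | zero =>
        intro _
        simp [hv0]
        rw [div_self (sub_ne_zero.2 (hv0 ▸ hz 0 (Nat.zero_le _)))]
      | succ n ih =>
        intro hn
        rw [Finset.prod_range_succ, ih (by omega)]
        rw [div_mul_div_cancel₀ (sub_ne_zero.2 (hz n (by omega)))]
    exact this N le_rfl
  have hbp : b ≠ p := by
    intro h
    rw [h, sub_self, norm_zero] at hvN; linarith
  -- exterior behaviour
  have hext : ∀ z, 3 * r ≤ ‖z - p‖ → 0 ≤ (s z).re := by
    intro z hz
    have hzp : z - p ≠ 0 := norm_pos_iff.1 (by linarith)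
    -- the ray
    let c : ℝ → ℂ := fun t => p + (t : ℂ) * (z - p)
    have hfar : ∀ t : ℝ, 1 ≤ t → ∀ i ≤ N, 2 * r * t ≤ ‖c t - v i‖ := by
      intro t ht i hi
      have h1 : c t - v i = (t : ℂ) * (z - p) - (v i - p) := by simp only [c]; ring
      rw [h1]
      have h2 := norm_sub_norm_le ((t : ℂ) * (z - p)) (v i - p)
      rw [norm_mul, Complex.norm_real, Real.norm_of_nonneg (by linarith)] at h2
      have h3 := (hv i hi).1
      nlinarith
    have hne : ∀ t : ℝ, 1 ≤ t → ∀ i ≤ N, c t ≠ v i := by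
      intro t ht i hi h
      have := hfar t ht i hi
      rw [h, sub_self, norm_zero] at this
      nlinarith
    have hlt : ∀ t : ℝ, 1 ≤ t → ∀ i < N, ‖(v (i + 1) - v i) / (c t - v (i + 1))‖ < 1 := by
      intro t ht i hi
      have := hfar t ht (i + 1) hi
      rw [norm_div, div_lt_one (by nlinarith)]
      have := (hst i hi).1
      nlinarith
    have hcont : ContinuousOn (fun t => s (c t)) (Ici 1) := by
      simp only [s]
      refine continuousOn_finsetProd _ fun i hi => ?_
      have hi' := Finset.mem_range.1 hi
      intro t ht
      have hsl : (c t - v i) / (c t - v (i + 1)) ∈ Complex.slitPlane := by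
        rw [factor_eq (hne t ht (i + 1) hi')]
        exact slit_of_norm_lt (hlt t ht i hi')
      refine ContinuousAt.comp_continuousWithinAt
        (f := fun t => (c t - v i) / (c t - v (i + 1))) (continuousAt_csq hsl) ?_
      refine ContinuousWithinAt.div (by fun_prop) (by fun_prop) ?_
      exact sub_ne_zero.2 (hne t ht (i + 1) hi')
    have hctop : Tendsto (fun t => ‖c t‖) atTop atTop := by
      have h1 : Tendsto (fun t : ℝ => t * ‖z - p‖ - ‖p‖) atTop atTop := by
        apply tendsto_atTop_add_const_right
        exact tendsto_id.atTop_mul_const (norm_pos_iff.2 hzp)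
      refine tendsto_atTop_mono' _ ?_ h1
      filter_upwards [eventually_ge_atTop 0] with t ht
      have := norm_sub_norm_le ((t : ℂ) * (z - p)) (-p)
      rw [norm_mul, Complex.norm_real, Real.norm_of_nonneg ht, norm_neg] at this
      refine this.trans_eq ?_
      simp only [c]; congr 1; ring
    have hlim : Tendsto (fun t => s (c t)) atTop (𝓝 1) := by
      have : (1 : ℂ) = ∏ i ∈ Finset.range N, 1 := by simp
      rw [this]
      simp only [s]
      refine tendsto_finsetProd _ fun i hi => ?_
      have hi' := Finset.mem_range.1 hi
      have h1 : csq 1 = 1 := by simp [csq]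
      have h2 : Tendsto (fun t => 1 + (v (i + 1) - v i) / (c t - v (i + 1))) atTop (𝓝 (1 + 0)) := by
        refine tendsto_const_nhds.add ?_
        rw [tendsto_zero_iff_norm_tendsto_zero]
        simp only [norm_div]
        refine Tendsto.const_div_atTop ?_ _
        refine tendsto_atTop_mono (fun t => norm_sub_norm_le (c t) (v (i + 1))) ?_
        exact tendsto_atTop_add_const_right _ _ hctop
      rw [add_zero] at h2
      have h3 := (continuousAt_csq (Complex.one_mem_slitPlane)).tendsto.comp h2
      rw [h1] at h3
      refine h3.congr' ?_
      filter_upwards [eventually_ge_atTop 1] with t ht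
      simp only [Function.comp]
      rw [factor_eq (hne t ht (i + 1) hi')]
    have hre : ∀ t : ℝ, 1 ≤ t → (s (c t)).re ≠ 0 := by
      intro t ht h0
      have h1 := hs2 (c t) (fun i hi => hne t ht i hi)
      rw [factor_eq (hne t ht N le_rfl)] at h1
      have h2 : (s (c t) ^ 2).re ≤ 0 := by
        rw [sq, Complex.mul_re, h0]; nlinarith [sq_nonneg (s (c t)).im]
      have h3 : ‖(b - p) / (c t - b)‖ ≤ 1 / 2 := by
        have := hfar t ht N le_rfl
        have h5 := (hv N le_rfl).1
        rw [norm_div, div_le_iff₀ (by nlinarith)]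
        nlinarith
      have h4 := (abs_le.1 (Complex.abs_re_le_norm ((b - p) / (c t - b)))).1
      rw [h1, Complex.add_re, Complex.one_re] at h2
      linarith
    have hc1 : c 1 = z := by simp [c]
    by_contra! hneg
    have hlim' : Tendsto (fun t => (s (c t)).re) atTop (𝓝 1) :=
      (Complex.continuous_re.tendsto _).comp hlim
    obtain ⟨t, ht, ht1⟩ := ((hlim'.eventually (lt_mem_nhds zero_lt_one)).and
      (eventually_ge_atTop 1)).exists
    have hivt := intermediate_value_Icc (f := fun t => (s (c t)).re) ht1
      (Complex.continuous_re.comp_continuousOn (hcont.mono Icc_subset_Ici_self))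
    obtain ⟨t', ht', h0⟩ := hivt (a := 0) ⟨by simp only [hc1]; exact hneg.le, ht.le⟩
    exact hre t' ht'.1 h0
  -- definitions
  have hs1 : ∀ z ∈ K, 1 + s z ≠ 0 := by
    intro z hz h0
    have h1 := hs2 z (fun i hi h => (hv i hi).2 (h ▸ hz))
    have h2 : s z = -1 := by linear_combination h0
    have hzb : z - b ≠ 0 := sub_ne_zero.2 (fun h => (hv N le_rfl).2 (by rwa [← hb, ← h]))
    rw [h2, eq_div_iff hzb] at h1
    exact hbp (by linear_combination -h1)
  let κ : ℂ := (p - b) / 4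
  have hκ0 : κ ≠ 0 := div_ne_zero (sub_ne_zero.2 hbp.symm) (by norm_num)
  have hκn : ‖κ‖ = ‖b - p‖ / 4 := by simp [κ, norm_sub_rev]
  let w : ℂ → ℂ := fun z => (1 + (-1) * s z) * (1 + s z)⁻¹
  have hwP : PolyLim K w := by
    refine ((PolyLim.const 1).add ((PolyLim.const _).mul hsP)).mul ?_
    exact ((PolyLim.const 1).add hsP).inv hK.isPreconnected hs1
  have hbr := (hv N le_rfl).1
  refine ⟨(p + b) / 2, κ, fun z => κ⁻¹ * w z, (PolyLim.const _).mul hwP, ?_, ?_, ?_⟩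
  · have : (p + b) / 2 - p = (b - p) / 2 := by ring
    rw [this, norm_div]; simp; linarith
  · rw [hκn]; linarith
  intro z hz
  have hid : w z * (z - (p + b) / 2) = κ * (1 + w z ^ 2) := by
    have h1 := hs2 z (fun i hi h => (hv i hi).2 (h ▸ hz))
    have hzb : z - b ≠ 0 := sub_ne_zero.2 (fun h => (hv N le_rfl).2 (by rwa [← hb, ← h]))
    rw [eq_div_iff hzb] at h1
    have h2 := hs1 z hz
    simp only [w, κ]
    field_simp
    linear_combination (-8) * h1
  have hm : ‖z - p‖ ≤ ‖z - (p + b) / 2‖ + r / 2 ∧ ‖z - (p + b) / 2‖ ≤ ‖z - p‖ + r / 2 := by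
    have h1 : ‖(b - p) / 2‖ ≤ r / 2 := by rw [norm_div]; simp; linarith
    constructor
    · have : z - p = (z - (p + b) / 2) + (b - p) / 2 := by ring
      rw [this]; exact (norm_add_le _ _).trans (by linarith)
    · have : (z - (p + b) / 2) = z - p - (b - p) / 2 := by ring
      rw [this]; exact (norm_sub_le _ _).trans (by linarith)
  have hw1 : 3 * r ≤ ‖z - p‖ → ‖w z‖ ≤ 1 := by
    intro h3
    have h4 := hext z h3
    simp only [w]
    rw [norm_mul, norm_inv, ← div_eq_mul_inv, div_le_one (norm_pos_iff.2 (hs1 z hz))]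
    rw [← sq_le_sq₀ (norm_nonneg _) (norm_nonneg _), ← Complex.normSq_eq_norm_sq,
      ← Complex.normSq_eq_norm_sq, Complex.normSq_apply, Complex.normSq_apply]
    simp
    nlinarith
  have hκr : r / 8 ≤ ‖κ‖ := by rw [hκn]; linarith
  have hκpos : 0 < ‖κ‖ := by linarith
  have heq : κ⁻¹ * w z * (z - (p + b) / 2) = 1 + w z ^ 2 := by
    rw [mul_assoc, hid, ← mul_assoc, inv_mul_cancel₀ hκ0, one_mul]
  refine ⟨?_, ?_, ?_⟩
  · rw [heq]; field_simp
  · have hw : ‖w z‖ ≤ 33 := by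
      by_cases h3 : 3 * r ≤ ‖z - p‖
      · linarith [hw1 h3]
      · push Not at h3
        have h5 : ‖w z‖ ^ 2 * ‖κ‖ ≤ ‖w z‖ * (4 * r) + ‖κ‖ := by
          have h6 : κ * w z ^ 2 = w z * (z - (p + b) / 2) - κ := by rw [hid]; ring
          have h7 := congrArg norm h6
          rw [norm_mul, norm_pow] at h7
          have h8 := norm_sub_le (w z * (z - (p + b) / 2)) κ
          rw [norm_mul] at h8
          have h9 : ‖w z‖ * ‖z - (p + b) / 2‖ ≤ ‖w z‖ * (4 * r) := by
            gcongr; linarith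
          linarith
        by_contra! hw
        have : 4 * r ≤ 32 * ‖κ‖ := by linarith
        have : ‖w z‖ * (4 * r) ≤ ‖w z‖ * (32 * ‖κ‖) := by gcongr
        have h10 : 0 < (‖w z‖ * (‖w z‖ - 32) - 1) * ‖κ‖ := by
          refine mul_pos ?_ hκpos
          nlinarith
        nlinarith
    rw [norm_mul, norm_inv]
    rw [inv_mul_le_iff₀ hκpos, mul_div_assoc', le_div_iff₀ hr]
    nlinarith
  · intro h4
    have h5 := hw1 (by linarith)
    have hy : 0 < ‖z - (p + b) / 2‖ := by linarith
    rw [le_div_iff₀ hy, ← norm_mul, heq]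
    refine (norm_add_le _ _).trans ?_
    rw [norm_one, norm_pow]
    nlinarith [norm_nonneg (w z)]

end Merg

namespace Merg
open Set Filter Topology

noncomputable def ker (δ : ℝ) (x : ℝ) : ℝ := 1 / (x * (1 + x / δ) ^ 2)

lemma ker_nonneg {δ x : ℝ} (hx : 0 ≤ x) : 0 ≤ ker δ x := by
  unfold ker; positivity

lemma kernel_alg {y t h κ : ℂ} {δ : ℝ} (hδ : 0 < δ) (hy : y ≠ 0) (hyt : y - t ≠ 0)
    (ht : ‖t‖ ≤ 12 * δ) (hκ : ‖κ‖ ≤ δ) (heq : h * y = 1 + κ ^ 2 * h ^ 2)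
    (hD : 24 * δ ≤ ‖y - t‖) (hh : ‖h‖ ≤ 2 / ‖y‖) :
    ‖1 / (y - t) - (h + t * h ^ 2)‖ ≤ 704 * δ ^ 2 / ‖y - t‖ ^ 3 := by
  set D := ‖y - t‖ with hDdef
  have hDpos : 0 < D := norm_pos_iff.2 hyt
  have hyn : D / 2 ≤ ‖y‖ := by
    have := norm_sub_le y t
    linarith
  have hypos : 0 < ‖y‖ := by linarith
  have hh' : ‖h‖ ≤ 4 / D := hh.trans (by
    rw [div_le_div_iff₀ hypos hDpos]; linarith)
  have hyinv : ‖1 / y‖ ≤ 2 / D := by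
    rw [norm_div, norm_one, div_le_div_iff₀ hypos hDpos]; linarith
  have e1 : h - 1 / y = κ ^ 2 * h ^ 2 * (1 / y) := by
    field_simp; linear_combination heq
  have n1 : ‖h - 1 / y‖ ≤ δ ^ 2 * (4 / D) ^ 2 * (2 / D) := by
    rw [e1, norm_mul, norm_mul, norm_pow, norm_pow]
    gcongr
  have e2 : 1 / (y - t) - (h + t * h ^ 2) =
      t ^ 2 * (1 / y) ^ 2 * (1 / (y - t)) - (h - 1 / y) - t * ((h - 1 / y) * (h + 1 / y)) := by
    field_simp; ring
  have n2 : ‖t ^ 2 * (1 / y) ^ 2 * (1 / (y - t))‖ ≤ (12 * δ) ^ 2 * (2 / D) ^ 2 * (1 / D) := by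
    rw [norm_mul, norm_mul, norm_pow, norm_pow, norm_div 1 (y - t), norm_one]
    gcongr
  have n3 : ‖t * ((h - 1 / y) * (h + 1 / y))‖ ≤
      (D / 2) * ((δ ^ 2 * (4 / D) ^ 2 * (2 / D)) * (4 / D + 2 / D)) := by
    rw [norm_mul, norm_mul]
    gcongr
    · linarith
    · exact (norm_add_le _ _).trans (add_le_add hh' hyinv)
  rw [e2]
  refine (norm_sub_le _ _).trans ((add_le_add ((norm_sub_le _ _).trans (add_le_add n2 n1)) n3).trans ?_)
  have : (12 * δ) ^ 2 * (2 / D) ^ 2 * (1 / D) + δ ^ 2 * (4 / D) ^ 2 * (2 / D) +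
    (D / 2) * ((δ ^ 2 * (4 / D) ^ 2 * (2 / D)) * (4 / D + 2 / D)) = 704 * δ ^ 2 / D ^ 3 := by
    field_simp; norm_num
  rw [this]

lemma kernel_near : ∃ C : ℝ, 0 < C ∧ ∀ (K : Set ℂ) [CompactSpace K], IsConnected Kᶜ →
    ∀ (δ : ℝ), 0 < δ → ∀ p ∉ K, ∀ ζ₀ : ℂ, ‖p - ζ₀‖ ≤ 10 * δ →
    ∃ a b : ℂ → ℂ, PolyLim K a ∧ PolyLim K b ∧ ∀ ζ, ‖ζ - ζ₀‖ ≤ δ → ∀ z ∈ K, z ≠ ζ →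
      ‖1 / (z - ζ) - (a z + ζ * b z)‖ ≤ C * ker δ ‖z - ζ‖ := by
  refine ⟨625 * (1 + 24 * 1080300), by norm_num, ?_⟩
  intro K _ hK δ hδ p hp ζ₀ hpζ
  obtain ⟨m, κ, h, hP, hm, hκ, H⟩ := mergelyan_lemma hK hp hδ
  refine ⟨fun z => h z + (-m) * (h z * h z), fun z => h z * h z, hP.add ((PolyLim.const _).mul
    (hP.mul hP)), hP.mul hP, ?_⟩
  intro ζ hζ z hz hne
  obtain ⟨heq, hb, hfar⟩ := H z hz
  have ht : ‖ζ - m‖ ≤ 12 * δ := by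
    have : ζ - m = (ζ - ζ₀) - (p - ζ₀) - (m - p) := by ring
    rw [this]
    refine (norm_sub_le _ _).trans ?_
    have := norm_sub_le (ζ - ζ₀) (p - ζ₀)
    linarith
  have hDpos : 0 < ‖z - ζ‖ := norm_pos_iff.2 (sub_ne_zero.2 hne)
  have hform : (h z + (-m) * (h z * h z)) + ζ * (h z * h z) = h z + (ζ - m) * h z ^ 2 := by ring
  rw [hform]
  by_cases hD : 24 * δ ≤ ‖z - ζ‖
  · have hyt : (z - m) - (ζ - m) = z - ζ := by ring
    have hyn : 12 * δ ≤ ‖z - m‖ := by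
      have := norm_sub_le (z - m) (ζ - m)
      rw [hyt] at this
      linarith
    have := kernel_alg (y := z - m) (t := ζ - m) (h := h z) hδ (norm_pos_iff.1 (by linarith))
      (by rw [hyt]; exact sub_ne_zero.2 hne) ht hκ heq (by rw [hyt]; exact hD)
      (hfar (by linarith))
    rw [hyt] at this
    refine this.trans ?_
    unfold ker
    set D := ‖z - ζ‖
    have h1 : 1 + D / δ ≤ 2 * (D / δ) := by
      have : 1 ≤ D / δ := by rw [le_div_iff₀ hδ]; linarith
      linarith
    have h2 : 1 / (D * (2 * (D / δ)) ^ 2) ≤ 1 / (D * (1 + D / δ) ^ 2) := by gcongr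
    have h3 : 1 / (D * (2 * (D / δ)) ^ 2) = (1 / 4) * (δ ^ 2 / D ^ 3) := by
      field_simp; norm_num
    have h4 : 704 * δ ^ 2 / D ^ 3 = 704 * (δ ^ 2 / D ^ 3) := by ring
    have h5 : 0 ≤ δ ^ 2 / D ^ 3 := by positivity
    rw [h4]
    nlinarith
  · push Not at hD
    unfold ker
    set D := ‖z - ζ‖ with hDd
    have n1 : ‖1 / (z - ζ) - (h z + (ζ - m) * h z ^ 2)‖ ≤
        1 / D + (300 / δ + 12 * δ * (300 / δ) ^ 2) := by
      refine (norm_sub_le _ _).trans (add_le_add (by rw [norm_div, norm_one])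
        ((norm_add_le _ _).trans (add_le_add hb ?_)))
      rw [norm_mul, norm_pow]
      gcongr
    refine n1.trans ?_
    have h1 : 300 / δ + 12 * δ * (300 / δ) ^ 2 = 1080300 * (1 / δ) := by field_simp; norm_num
    have h2 : 1 / δ ≤ 24 * (1 / D) := by
      rw [mul_one_div, div_le_div_iff₀ hδ hDpos]; linarith
    have h3 : (1 + D / δ) ^ 2 ≤ 625 := by
      have : D / δ ≤ 24 := by rw [div_le_iff₀ hδ]; exact hD.le
      have : 0 ≤ D / δ := by positivity
      nlinarith
    have h4 : 1 / (D * 625) ≤ 1 / (D * (1 + D / δ) ^ 2) := by gcongr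
    have h5 : 1 / (D * 625) = (1 / 625) * (1 / D) := by field_simp
    rw [h1]
    nlinarith

lemma kernel_far (K : Set ℂ) [CompactSpace K] (hK : IsConnected Kᶜ) {ζ₀ : ℂ} (h0 : ζ₀ ∉ K)
    {τ : ℝ} (hτ : 0 < τ) : ∃ a : ℂ → ℂ, PolyLim K a ∧ ∃ ρ > 0, ∀ ζ, ‖ζ - ζ₀‖ < ρ → ∀ z ∈ K,
      ‖1 / (z - ζ) - a z‖ ≤ τ := by
  have hKc : IsCompact K := isCompact_iff_compactSpace.2 inferInstance
  obtain ⟨d, hd, hball⟩ := Metric.isOpen_iff.1 hKc.isClosed.isOpen_compl ζ₀ h0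
  have hdz : ∀ z ∈ K, d ≤ ‖z - ζ₀‖ := by
    intro z hz
    by_contra! hlt
    exact hball (by rwa [Metric.mem_ball, dist_eq_norm]) hz
  refine ⟨fun z => (z + -ζ₀)⁻¹, ?_, min (d / 2) (τ * d ^ 2 / 2), by positivity, ?_⟩
  · refine (PolyLim.id.add (PolyLim.const _)).inv hK.isPreconnected fun z hz h => h0 ?_
    rw [← sub_eq_add_neg, sub_eq_zero] at h; rwa [h] at hz
  · intro ζ hζ z hz
    have h1 := hdz z hz
    have h2 : d / 2 ≤ ‖z - ζ‖ := by
      have h3 := lt_of_lt_of_le hζ (min_le_left _ _)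
      have h4 : z - ζ₀ = (z - ζ) + (ζ - ζ₀) := by ring
      have h5 := norm_add_le (z - ζ) (ζ - ζ₀)
      rw [← h4] at h5
      linarith
    have hz0 : z - ζ₀ ≠ 0 := norm_pos_iff.1 (by linarith)
    have hzz : z - ζ ≠ 0 := norm_pos_iff.1 (by linarith)
    have : 1 / (z - ζ) - (z + -ζ₀)⁻¹ = (ζ - ζ₀) / ((z - ζ) * (z - ζ₀)) := by
      rw [← sub_eq_add_neg]
      field_simp; ring
    rw [this, norm_div, norm_mul, div_le_iff₀ (by positivity)]
    have h3 := lt_of_lt_of_le hζ (min_le_right _ _)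
    have : d / 2 * d ≤ ‖z - ζ‖ * ‖z - ζ₀‖ := by gcongr
    nlinarith

open MeasureTheory

lemma ker_int {δ : ℝ} (hδ : 0 < δ) : Integrable (fun ζ : ℂ => ker δ ‖ζ‖) ∧
    ∫ ζ : ℂ, ker δ ‖ζ‖ = 2 * Real.pi * δ := by
  have hderiv : ∀ y ∈ Ici (0:ℝ), HasDerivAt (fun y => - δ / (1 + y / δ)) (1 / (1 + y / δ) ^ 2) y := by
    intro y hy
    have hy' : (0:ℝ) ≤ y := hy
    have hp : 1 + y / δ ≠ 0 := by positivity
    have h1 : HasDerivAt (fun y : ℝ => 1 + y / δ) (1 / δ) y := ((hasDerivAt_id y).div_const δ).const_add 1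
    have := (hasDerivAt_const y (-δ)).div h1 hp
    refine this.congr_deriv ?_
    field_simp; ring
  have hlim : Tendsto (fun y => - δ / (1 + y / δ)) atTop (𝓝 0) := by
    refine Tendsto.const_div_atTop ?_ _
    exact tendsto_atTop_add_const_left _ _ (tendsto_id.atTop_div_const hδ)
  have hI := integrableOn_Ioi_deriv_of_nonneg' hderiv (fun y _ => by positivity) hlim
  have hV := integral_Ioi_of_hasDerivAt_of_nonneg' hderiv (fun y _ => by positivity) hlim
  have hcongr : EqOn (fun y : ℝ => y ^ (Module.finrank ℝ ℂ - 1) • ker δ y)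
      (fun y => 1 / (1 + y / δ) ^ 2) (Ioi 0) := by
    intro y hy
    have hy' : (0:ℝ) < y := hy
    simp only [Complex.finrank_real_complex, ker, smul_eq_mul]
    have hp : 1 + y / δ ≠ 0 := by positivity
    field_simp
    norm_num
  constructor
  · rw [integrable_fun_norm_addHaar volume (f := ker δ)]
    exact (integrableOn_congr_fun hcongr measurableSet_Ioi).2 hI
  · rw [integral_fun_norm_addHaar volume (ker δ), setIntegral_congr_fun measurableSet_Ioi hcongr, hV]
    simp [Measure.real, Complex.volume_ball]
    ring

end Merg

namespace Merg
open Set Filter Topology MeasureTheory Complex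

variable {E : Type*} [NormedAddCommGroup E] [NormedSpace ℂ E]

noncomputable def dbar (F : ℂ → E) (ζ : ℂ) : E := fderiv ℝ F ζ 1 + I • fderiv ℝ F ζ I

lemma dbar_continuous {F : ℂ → E} (hF : ContDiff ℝ 1 F) : Continuous (dbar F) := by
  have h : Continuous (fderiv ℝ F) := hF.continuous_fderiv (by norm_num)
  unfold dbar
  exact (h.clm_apply continuous_const).add ((h.clm_apply continuous_const).const_smul I)

lemma dbar_eq_zero_of_differentiableAt {F : ℂ → E} {z : ℂ} (h : DifferentiableAt ℂ F z) :
    dbar F z = 0 := by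
  have : HasFDerivAt F ((fderiv ℂ F z).restrictScalars ℝ) z := h.hasFDerivAt.restrictScalars ℝ
  unfold dbar
  rw [this.fderiv]
  simp only [ContinuousLinearMap.coe_restrictScalars']
  have : (fderiv ℂ F z) I = I • (fderiv ℂ F z) 1 := by
    rw [← ContinuousLinearMap.map_smul]; simp
  rw [this, smul_smul]; simp

lemma pompeiu_zero [CompleteSpace E] {F : ℂ → E} (hF : ContDiff ℝ 1 F) {R : ℝ} (hR : 0 < R)
    (hs : ∀ ζ, R ≤ ‖ζ‖ → F ζ = 0) :
    ∫ ζ, ζ⁻¹ • dbar F ζ = - (2 * Real.pi : ℂ) • F 0 := by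
  have hfc : Continuous (fderiv ℝ F) := hF.continuous_fderiv (by norm_num)
  have hs' : ∀ ζ, R < ‖ζ‖ → fderiv ℝ F ζ = 0 := by
    intro ζ hζ
    have : F =ᶠ[𝓝 ζ] fun _ => 0 := by
      filter_upwards [(continuous_norm.isOpen_preimage _ isOpen_Ioi).mem_nhds hζ] with w hw
      exact hs w (le_of_lt hw)
    rw [this.fderiv_eq]; simp
  let e : ℝ × ℝ → ℂ := fun p => exp (p.2 * I)
  have hec : Continuous e := by fun_prop
  let A : ℝ × ℝ → E := fun p => fderiv ℝ F (p.1 * e p) (e p)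
  let B : ℝ × ℝ → E := fun p => fderiv ℝ F (p.1 * e p) (I * e p)
  have hAc : Continuous A := (hfc.comp (by fun_prop)).clm_apply hec
  have hBc : Continuous B := (hfc.comp (by fun_prop)).clm_apply (by fun_prop)
  have hen : ∀ p, ‖e p‖ = 1 := fun p => by simp [e, Complex.norm_exp]
  have key : ∀ p : ℝ × ℝ, 0 < p.1 →
      p.1 • (((Complex.polarCoord.symm p : ℂ))⁻¹ • dbar F (Complex.polarCoord.symm p))
        = A p + I • B p := by
    intro p hp
    have h1 : (Complex.polarCoord.symm p : ℂ) = p.1 * e p := by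
      rw [Complex.polarCoord_symm_apply]; simp [e, Complex.exp_mul_I]
    rw [h1]
    set L := fderiv ℝ F (p.1 * e p) with hL
    have he : ∀ w : ℂ, L w = (w.re : ℂ) • L 1 + (w.im : ℂ) • L I := by
      intro w
      conv_lhs => rw [show w = w.re • (1:ℂ) + w.im • I by simp]
      rw [map_add, map_smul, map_smul]; simp
    have h2 : A p + I • B p = L (e p) + I • L (I * e p) := rfl
    rw [h2, he (e p), he (I * e p)]
    have h3 : p.1 • (((p.1:ℂ) * e p)⁻¹ • dbar F (p.1 * e p)) = (e p)⁻¹ • (L 1 + I • L I) := by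
      rw [show p.1 • (((p.1:ℂ) * e p)⁻¹ • dbar F (p.1 * e p)) =
        (p.1 : ℂ) • (((p.1:ℂ) * e p)⁻¹ • dbar F (p.1 * e p)) by simp, smul_smul]
      congr 1
      rw [mul_inv, ← mul_assoc, mul_inv_cancel₀ (by exact_mod_cast hp.ne'), one_mul]
    rw [h3]
    have h4 : (e p)⁻¹ = (e p).re - (e p).im * I := by
      rw [Complex.inv_def, Complex.normSq_eq_norm_sq, hen]
      apply Complex.ext <;> simp
    rw [h4]
    simp only [mul_re, I_re, I_im, mul_im, smul_add, smul_smul]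
    simp only [zero_mul, zero_sub, one_mul, ofReal_neg, zero_add]
    rw [sub_mul, mul_assoc ((e p).im : ℂ) I I, I_mul_I]
    module
  have hAz : ∀ p : ℝ × ℝ, R < p.1 → A p + I • B p = 0 := by
    intro p hp
    have : fderiv ℝ F (p.1 * e p) = 0 := hs' _ (by
      rw [norm_mul, hen, mul_one, Complex.norm_real, Real.norm_eq_abs]
      exact lt_of_lt_of_le hp (le_abs_self _))
    simp [A, B, this]
  rw [← Complex.integral_comp_polarCoord_symm, polarCoord_target]
  have hset : Ioc (0:ℝ) R ×ˢ Ioo (-Real.pi) Real.pi ⊆ Ioi (0:ℝ) ×ˢ Ioo (-Real.pi) Real.pi :=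
    prod_mono Ioc_subset_Ioi_self le_rfl
  have hm : MeasurableSet (Ioi (0:ℝ) ×ˢ Ioo (-Real.pi) Real.pi) :=
    measurableSet_Ioi.prod measurableSet_Ioo
  rw [setIntegral_congr_fun hm (fun p hp => key p hp.1)]
  rw [setIntegral_eq_of_subset_of_forall_sdiff_eq_zero hm hset (fun p hp => hAz p (by
    by_contra hcon
    exact hp.2 ⟨⟨hp.1.1, not_lt.1 hcon⟩, hp.1.2⟩))]
  have hint : ∀ {G : ℝ × ℝ → E}, Continuous G →
      IntegrableOn G (Ioc (0:ℝ) R ×ˢ Ioo (-Real.pi) Real.pi) := by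
    intro G hG
    exact (hG.continuousOn.integrableOn_compact (isCompact_Icc.prod isCompact_Icc)).mono_set
      (prod_mono Ioc_subset_Icc_self Ioo_subset_Icc_self)
  rw [integral_add (hint hAc) (hint (G := fun p => I • B p) (hBc.const_smul I)), integral_smul]
  have hFd : ∀ z, HasFDerivAt F (fderiv ℝ F z) z := fun z =>
    (hF.differentiable (by norm_num) z).hasFDerivAt
  have hpi : -Real.pi ≤ Real.pi := by linarith [Real.pi_pos]
  have hB0 : ∫ p in Ioc (0:ℝ) R ×ˢ Ioo (-Real.pi) Real.pi, B p = 0 := by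
    rw [Measure.volume_eq_prod, setIntegral_prod _ (hint hBc)]
    rw [setIntegral_congr_fun measurableSet_Ioc (g := fun _ => (0:E)), integral_zero]
    intro r hr
    have hd : ∀ θ ∈ uIcc (-Real.pi) Real.pi,
        HasDerivAt (fun θ : ℝ => (r⁻¹ : ℝ) • F (r * exp (θ * I))) (B (r, θ)) θ := by
      intro θ _
      have h1 : HasDerivAt (fun θ : ℝ => (r : ℂ) * exp (θ * I)) (r * (exp (θ * I) * (1 * I))) θ :=
        (((hasDerivAt_id (θ:ℝ)).ofReal_comp.mul_const I).cexp).const_mul _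
      have h2 := ((hFd _).comp_hasDerivAt θ h1).const_smul (r⁻¹ : ℝ)
      refine h2.congr_deriv ?_
      rw [← map_smul]
      simp only [B, e]
      congr 1
      have : (r:ℂ) ≠ 0 := by exact_mod_cast hr.1.ne'
      simp
      field_simp
    have hci : IntervalIntegrable (fun θ => B (r, θ)) volume (-Real.pi) Real.pi :=
      (hBc.comp (by fun_prop)).intervalIntegrable _ _
    have := intervalIntegral.integral_eq_sub_of_hasDerivAt hd hci
    rw [intervalIntegral.integral_of_le hpi, integral_Ioc_eq_integral_Ioo] at this
    simp only [this]
    rw [show exp (((-Real.pi : ℝ) : ℂ) * I) = exp ((Real.pi : ℂ) * I) by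
      rw [ofReal_neg, neg_mul, exp_neg, exp_pi_mul_I]; norm_num]
    simp
  have hA0 : ∫ p in Ioc (0:ℝ) R ×ˢ Ioo (-Real.pi) Real.pi, A p = - (2 * Real.pi : ℂ) • F 0 := by
    have hint2 : IntegrableOn (fun p : ℝ × ℝ => A p.swap)
        (Ioo (-Real.pi) Real.pi ×ˢ Ioc (0:ℝ) R) := by
      exact ((hAc.comp continuous_swap).continuousOn.integrableOn_compact
        (isCompact_Icc.prod isCompact_Icc)).mono_set
        (prod_mono Ioo_subset_Icc_self Ioc_subset_Icc_self)
    rw [Measure.volume_eq_prod, ← setIntegral_prod_swap, setIntegral_prod _ hint2]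
    rw [setIntegral_congr_fun measurableSet_Ioo (g := fun _ => -F 0)]
    · rw [setIntegral_const]
      have : volume.real (Ioo (-Real.pi) Real.pi) = 2 * Real.pi := by
        rw [Real.volume_real_Ioo_of_le hpi]; ring
      rw [this, smul_neg, neg_smul]
      congr 1
      rw [show (2 * Real.pi : ℂ) = ((2 * Real.pi : ℝ) : ℂ) by push_cast; rfl]
      exact (Complex.coe_smul _ _).symm
    intro θ _
    have hd : ∀ r ∈ uIcc (0:ℝ) R,
        HasDerivAt (fun r : ℝ => F (r * exp (θ * I))) (A (r, θ)) r := by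
      intro r _
      have h1 : HasDerivAt (fun r : ℝ => (r : ℂ) * exp (θ * I)) (1 * exp (θ * I)) r :=
        (hasDerivAt_id (r:ℝ)).ofReal_comp.mul_const _
      refine ((hFd _).comp_hasDerivAt r h1).congr_deriv ?_
      simp [A, e]
    have hci : IntervalIntegrable (fun r => A (r, θ)) volume 0 R :=
      (hAc.comp (by fun_prop)).intervalIntegrable _ _
    have := intervalIntegral.integral_eq_sub_of_hasDerivAt hd hci
    rw [intervalIntegral.integral_of_le hR.le] at this
    simp only [Prod.swap_prod_mk, this]
    rw [hs]
    · simp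
    · simp [Complex.norm_exp, abs_of_pos hR]
  rw [hA0, hB0]; simp

lemma pompeiu [CompleteSpace E] {F : ℂ → E} (hF : ContDiff ℝ 1 F) (hs : HasCompactSupport F)
    (z : ℂ) :
    ∫ ζ, (z - ζ)⁻¹ • dbar F ζ = (2 * Real.pi : ℂ) • F z := by
  have hG : ContDiff ℝ 1 (fun w => F (w + z)) := hF.comp (contDiff_id.add contDiff_const)
  obtain ⟨R, hR⟩ := hs.isCompact.isBounded.subset_ball (0:ℂ)
  have h := pompeiu_zero hG (R := max 1 (R + ‖z‖)) (by positivity) (fun ζ hζ => by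
    by_contra hcon
    have h1 := hR (subset_tsupport _ hcon)
    rw [mem_ball_zero_iff] at h1
    have h2 := norm_sub_le (ζ + z) z
    rw [add_sub_cancel_right] at h2
    have := le_max_right 1 (R + ‖z‖)
    linarith)
  have hd : ∀ w, dbar (fun w => F (w + z)) w = dbar F (w + z) := by
    intro w; unfold dbar; rw [fderiv_comp_add_right]
  simp only [hd, zero_add] at h
  rw [← integral_add_right_eq_self _ z]
  simp only [sub_add_cancel_right, inv_neg, neg_smul]
  rw [integral_neg, h]; simp

end Merg

namespace Merg
open Set Filter Topology MeasureTheory Complex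

noncomputable def bmp (x : ℝ) : ℝ := Real.smoothTransition (x + 1) - Real.smoothTransition x

lemma bmp_nonneg (x : ℝ) : 0 ≤ bmp x := by
  unfold bmp; linarith [Real.smoothTransition.monotone (show x ≤ x + 1 by linarith)]

lemma bmp_supp {x : ℝ} (h : bmp x ≠ 0) : |x| ≤ 1 := by
  by_contra hc
  apply h
  unfold bmp
  rcases lt_abs.1 (not_le.1 hc) with h1 | h1
  · rw [Real.smoothTransition.one_of_one_le (by linarith),
      Real.smoothTransition.one_of_one_le (by linarith), sub_self]
  · rw [Real.smoothTransition.zero_of_nonpos (by linarith),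
      Real.smoothTransition.zero_of_nonpos (by linarith), sub_self]

lemma bmp_contDiff : ContDiff ℝ 1 bmp := by
  unfold bmp
  have : ContDiff ℝ 1 Real.smoothTransition := Real.smoothTransition.contDiff (n := 1)
  exact (this.comp (contDiff_id.add contDiff_const)).sub this

lemma bmp_sum {N : ℕ} {x : ℝ} (hx : |x| ≤ N) :
    ∑ k ∈ Finset.range (2 * N + 1), bmp (x - (k - N)) = 1 := by
  have := Finset.sum_range_sub' (fun k : ℕ => Real.smoothTransition (x - (k - N) + 1)) (2 * N + 1)
  rw [abs_le] at hx
  rw [Finset.sum_congr rfl (fun k _ => ?_), this]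
  · rw [Real.smoothTransition.one_of_one_le (by push_cast; linarith),
      Real.smoothTransition.zero_of_nonpos (by push_cast; linarith), sub_zero]
  · unfold bmp
    congr 2
    push_cast; ring

noncomputable def bmp2 (z : ℂ) : ℝ := bmp z.re * bmp z.im

lemma bmp2_contDiff : ContDiff ℝ 1 bmp2 :=
  (bmp_contDiff.comp reCLM.contDiff).mul (bmp_contDiff.comp imCLM.contDiff)

lemma bmp2_supp {z : ℂ} (h : bmp2 z ≠ 0) : |z.re| ≤ 1 ∧ |z.im| ≤ 1 :=
  ⟨bmp_supp (left_ne_zero_of_mul h), bmp_supp (right_ne_zero_of_mul h)⟩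

lemma bmp2_tsupp {z : ℂ} (h : z ∈ tsupport bmp2) : |z.re| ≤ 1 ∧ |z.im| ≤ 1 := by
  have hcl : IsClosed {z : ℂ | |z.re| ≤ 1 ∧ |z.im| ≤ 1} :=
    (isClosed_le (f := fun z : ℂ => |z.re|) (by fun_prop) continuous_const).inter
      (isClosed_le (f := fun z : ℂ => |z.im|) (by fun_prop) continuous_const)
  exact closure_minimal (fun z hz => bmp2_supp hz) hcl h

lemma bmp2_compact : HasCompactSupport bmp2 := by
  refine HasCompactSupport.intro (isCompact_closedBall (0:ℂ) 2) ?_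
  intro z hz
  by_contra hc
  obtain ⟨h1, h2⟩ := bmp2_supp hc
  apply hz
  rw [mem_closedBall_zero_iff]
  have := Complex.norm_le_abs_re_add_abs_im z
  linarith

lemma card_aux (n : ℕ) (y : ℝ) :
    ((Finset.range n).filter (fun k : ℕ => |y - k| ≤ 1)).card ≤ 3 := by
  have : (Finset.range n).filter (fun k : ℕ => |y - k| ≤ 1) ⊆
      Finset.Icc (⌊y⌋₊ - 1) (⌊y⌋₊ + 1) := by
    intro k hk
    have h := abs_le.1 (Finset.mem_filter.1 hk).2
    rw [Finset.mem_Icc]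
    have h1 := Nat.lt_floor_add_one y
    constructor
    · by_contra hc
      have hpos : 0 < ⌊y⌋₊ := by omega
      have h2 := Nat.floor_le (Nat.pos_of_floor_pos hpos).le
      have : k + 2 ≤ ⌊y⌋₊ := by omega
      have : ((k + 2 : ℕ) : ℝ) ≤ ⌊y⌋₊ := by exact_mod_cast this
      push_cast at this
      linarith
    · by_contra hc
      have : ⌊y⌋₊ + 2 ≤ k := by omega
      have : ((⌊y⌋₊ + 2 : ℕ) : ℝ) ≤ k := by exact_mod_cast this
      push_cast at this
      linarith
  refine (Finset.card_le_card this).trans ?_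
  rw [Nat.card_Icc]; omega

lemma partition : ∃ C : ℝ, 0 < C ∧ ∀ δ : ℝ, 0 < δ → ∀ R : ℝ,
    ∃ (s : Finset (ℕ × ℕ)) (q : ℕ × ℕ → ℂ) (φ : ℕ × ℕ → ℂ → ℝ),
      (∀ j, ContDiff ℝ 1 (φ j)) ∧ (∀ j z, 0 ≤ φ j z) ∧
      (∀ j, tsupport (φ j) ⊆ Metric.closedBall (q j) (2 * δ)) ∧
      (∀ z : ℂ, ‖z‖ ≤ R → ∑ j ∈ s, φ j z = 1) ∧
      (∀ ζ, ∑ j ∈ s, ‖fderiv ℝ (φ j) ζ‖ ≤ C / δ) := by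
  obtain ⟨C0, hC0⟩ := (bmp2_compact.fderiv ℝ).exists_bound_of_continuous
    (bmp2_contDiff.continuous_fderiv (by norm_num))
  have hC0' : 0 ≤ C0 := (norm_nonneg _).trans (hC0 0)
  refine ⟨9 * (C0 + 1), by positivity, fun δ hδ R => ?_⟩
  obtain ⟨N, hN⟩ := exists_nat_ge (R / δ)
  let c : ℕ × ℕ → ℂ := fun k => ⟨(k.1:ℝ) - N, (k.2:ℝ) - N⟩
  let φ : ℕ × ℕ → ℂ → ℝ := fun k z => bmp2 (δ⁻¹ • z - c k)
  have hts : ∀ j z, z ∈ tsupport (φ j) → δ⁻¹ • z - c j ∈ tsupport bmp2 := by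
    intro j z hz
    have hcont : Continuous (fun z : ℂ => δ⁻¹ • z - c j) := by fun_prop
    exact closure_minimal (t := (fun z : ℂ => δ⁻¹ • z - c j) ⁻¹' tsupport bmp2)
      (fun w hw => subset_tsupport _ hw) ((isClosed_tsupport _).preimage hcont) hz
  refine ⟨Finset.range (2 * N + 1) ×ˢ Finset.range (2 * N + 1), fun k => δ • c k, φ, ?_, ?_, ?_,
    ?_, ?_⟩
  · intro j
    exact bmp2_contDiff.comp ((contDiff_id.const_smul δ⁻¹).sub contDiff_const)
  · intro j z; exact mul_nonneg (bmp_nonneg _) (bmp_nonneg _)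
  · intro j z hz
    obtain ⟨h1, h2⟩ := bmp2_tsupp (hts j z hz)
    have := Complex.norm_le_abs_re_add_abs_im (δ⁻¹ • z - c j)
    rw [mem_closedBall_iff_norm]
    have he : z - δ • c j = δ • (δ⁻¹ • z - c j) := by
      rw [smul_sub, smul_inv_smul₀ hδ.ne']
    rw [he, norm_smul, Real.norm_of_nonneg hδ.le]
    nlinarith
  · intro z hz
    rw [Finset.sum_product]
    simp only [φ, bmp2, c, Complex.sub_re, Complex.sub_im, Complex.smul_re, Complex.smul_im]
    have hb : ∀ x : ℝ, |x| ≤ ‖z‖ → |δ⁻¹ • x| ≤ N := by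
      intro x hx
      refine le_trans ?_ hN
      rw [smul_eq_mul, abs_mul, abs_of_pos (inv_pos.2 hδ), ← div_eq_inv_mul]
      gcongr
      exact hx.trans hz
    simp_rw [← Finset.mul_sum]
    simp_rw [bmp_sum (hb _ (Complex.abs_im_le_norm z)), mul_one]
    exact bmp_sum (hb _ (Complex.abs_re_le_norm z))
  · intro ζ
    have hbd : ∀ j, ‖fderiv ℝ (φ j) ζ‖ ≤ (C0 + 1) / δ := by
      intro j
      have h1 : HasFDerivAt (fun z : ℂ => δ⁻¹ • z - c j) (δ⁻¹ • ContinuousLinearMap.id ℝ ℂ) ζ :=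
        ((hasFDerivAt_id ζ).const_smul δ⁻¹).sub_const _
      have h2 := (bmp2_contDiff.differentiable (by norm_num) (δ⁻¹ • ζ - c j)).hasFDerivAt.comp ζ h1
      have h3 : fderiv ℝ (φ j) ζ = _ := h2.fderiv
      rw [h3]
      refine (ContinuousLinearMap.opNorm_comp_le _ _).trans ?_
      rw [norm_smul, ContinuousLinearMap.norm_id, mul_one, norm_inv, Real.norm_of_nonneg hδ.le,
        div_eq_mul_inv]
      gcongr
      linarith [hC0 (δ⁻¹ • ζ - c j)]
    set S := Finset.range (2 * N + 1) with hS
    set A := (S.filter (fun k : ℕ => |((δ⁻¹ • ζ).re + N) - k| ≤ 1)) ×ˢ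
      (S.filter (fun k : ℕ => |((δ⁻¹ • ζ).im + N) - k| ≤ 1)) with hA
    have hsub : A ⊆ S ×ˢ S := Finset.product_subset_product (Finset.filter_subset _ _)
      (Finset.filter_subset _ _)
    rw [← Finset.sum_subset hsub]
    · refine (Finset.sum_le_card_nsmul _ _ _ (fun j _ => hbd j)).trans ?_
      have hcard : A.card ≤ 9 := by
        rw [hA, Finset.card_product]
        exact Nat.mul_le_mul (card_aux _ _) (card_aux _ _)
      rw [nsmul_eq_mul, mul_div_assoc]
      gcongr
      exact_mod_cast hcard
    · intro j hj hjA
      by_contra hc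
      apply hjA
      have hz : ζ ∈ tsupport (φ j) := support_fderiv_subset ℝ (fun h => hc (by rw [h, norm_zero]))
      obtain ⟨h1, h2⟩ := bmp2_tsupp (hts j ζ hz)
      rw [Finset.mem_product] at hj
      rw [hA, Finset.mem_product, Finset.mem_filter, Finset.mem_filter]
      refine ⟨⟨hj.1, ?_⟩, hj.2, ?_⟩
      · convert h1 using 2; simp [c]; ring
      · convert h2 using 2; simp [c]; ring

end Merg

namespace Merg
open Set Filter Topology MeasureTheory Complex

variable {E : Type*} [NormedAddCommGroup E] [NormedSpace ℂ E]

noncomputable def dsc (φ : ℂ → ℝ) (ζ : ℂ) : ℂ := (fderiv ℝ φ ζ 1 : ℂ) + I * (fderiv ℝ φ ζ I : ℂ)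

lemma norm_dsc_le (φ : ℂ → ℝ) (ζ : ℂ) : ‖dsc φ ζ‖ ≤ 2 * ‖fderiv ℝ φ ζ‖ := by
  unfold dsc
  refine (norm_add_le _ _).trans ?_
  rw [norm_mul, Complex.norm_I, one_mul, Complex.norm_real, Complex.norm_real]
  have h1 := (fderiv ℝ φ ζ).le_opNorm 1
  have h2 := (fderiv ℝ φ ζ).le_opNorm I
  simp at h1 h2
  simp only [Real.norm_eq_abs]
  linarith

lemma dsc_ne {φ : ℂ → ℝ} {ζ : ℂ} (h : dsc φ ζ ≠ 0) : ζ ∈ tsupport φ := by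
  apply support_fderiv_subset ℝ
  intro h0
  apply h
  simp [dsc, h0]

lemma dbar_smul {φ : ℂ → ℝ} {G : ℂ → E} (hφ : ContDiff ℝ 1 φ)
    (hG : ∀ ζ ∈ tsupport φ, DifferentiableAt ℂ G ζ) (ζ : ℂ) :
    dbar (fun z => φ z • G z) ζ = dsc φ ζ • G ζ := by
  by_cases hζ : ζ ∈ tsupport φ
  · have h1 := (hφ.differentiable (by norm_num) ζ).hasFDerivAt
    have h2 := ((hG ζ hζ).restrictScalars ℝ).hasFDerivAt
    have h3 := dbar_eq_zero_of_differentiableAt (hG ζ hζ)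
    unfold dbar at h3 ⊢
    have h5 : fderiv ℝ (fun z => φ z • G z) ζ = _ := (h1.smul h2).fderiv
    rw [h5]
    simp only [ContinuousLinearMap.add_apply, ContinuousLinearMap.smul_apply,
      ContinuousLinearMap.smulRight_apply, dsc, add_smul, mul_smul, smul_add, Complex.coe_smul]
    have h4 : φ ζ • (fderiv ℝ G ζ 1) + I • φ ζ • (fderiv ℝ G ζ I) = 0 := by
      rw [smul_comm I (φ ζ), ← smul_add, h3, smul_zero]
    rw [add_add_add_comm, h4, zero_add]
  · have h1 : (fun z => φ z • G z) =ᶠ[𝓝 ζ] fun _ => 0 := by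
      filter_upwards [(isClosed_tsupport φ).isOpen_compl.mem_nhds hζ] with w hw
      rw [image_eq_zero_of_notMem_tsupport hw, zero_smul]
    have h2 : dsc φ ζ = 0 := by
      by_contra h; exact hζ (dsc_ne h)
    rw [h2, zero_smul]
    unfold dbar; rw [h1.fderiv_eq]; simp

lemma contDiff_smul_loc {φ : ℂ → ℝ} {G : ℂ → E} (hφ : ContDiff ℝ 1 φ)
    (hG : ∀ ζ ∈ tsupport φ, ContDiffAt ℂ 1 G ζ) : ContDiff ℝ 1 (fun z => φ z • G z) := by
  rw [contDiff_iff_contDiffAt]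
  intro ζ
  by_cases hζ : ζ ∈ tsupport φ
  · exact hφ.contDiffAt.smul ((hG ζ hζ).restrict_scalars ℝ)
  · have h1 : (fun z => φ z • G z) =ᶠ[𝓝 ζ] fun _ => 0 := by
      filter_upwards [(isClosed_tsupport φ).isOpen_compl.mem_nhds hζ] with w hw
      rw [image_eq_zero_of_notMem_tsupport hw, zero_smul]
    exact contDiffAt_const.congr_of_eventuallyEq h1

lemma dbar_sum {ι : Type*} (s : Finset ι) (G : ι → ℂ → E) (hG : ∀ i, ContDiff ℝ 1 (G i)) (ζ : ℂ) :
    dbar (fun z => ∑ i ∈ s, G i z) ζ = ∑ i ∈ s, dbar (G i) ζ := by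
  unfold dbar
  rw [fderiv_fun_sum (fun i _ => (hG i).differentiable (by norm_num) ζ)]
  simp [Finset.sum_add_distrib, Finset.smul_sum]

lemma smoothing [CompleteSpace E] : ∃ C : ℝ, 0 < C ∧ ∀ (K : Set ℂ), IsCompact K → ∀ f : ℂ → E,
    DifferentiableOn ℂ f (interior K) → ∀ δ : ℝ, 0 < δ → ∀ ω : ℝ, 0 ≤ ω →
    (∀ a ∈ K, ∀ b ∈ K, ‖a - b‖ ≤ 6 * δ → ‖f a - f b‖ ≤ ω) →
    ∃ F : ℂ → E, ContDiff ℝ 1 F ∧ HasCompactSupport F ∧ (∀ z ∈ K, ‖F z - f z‖ ≤ ω) ∧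
      (∀ ζ₀ ∈ K, ∀ ζ, ‖ζ - ζ₀‖ ≤ δ → ‖dbar F ζ‖ ≤ C * ω / δ) ∧
      (∀ ζ₀, Metric.closedBall ζ₀ (6 * δ) ⊆ K → ∀ ζ, ‖ζ - ζ₀‖ ≤ δ → dbar F ζ = 0) := by
  classical
  obtain ⟨C, hC, hpart⟩ := partition
  refine ⟨2 * C, by positivity, fun K hK f hfd δ hδ ω hω0 hω => ?_⟩
  obtain ⟨R0, hR0⟩ := hK.isBounded.exists_norm_le
  obtain ⟨s, q, φ, hφ, hφ0, hsupp, hsum, hder⟩ := hpart δ hδ (R0 + 2 * δ)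
  let G : ℕ × ℕ → ℂ → E := fun j =>
    if Metric.closedBall (q j) (3 * δ) ⊆ K then f
    else if h : (Metric.closedBall (q j) (3 * δ) ∩ K).Nonempty then fun _ => f h.some else fun _ => 0
  have hGc : ∀ j, ∀ ζ ∈ tsupport (φ j), ContDiffAt ℂ 1 (G j) ζ := by
    intro j ζ hζ
    by_cases h1 : Metric.closedBall (q j) (3 * δ) ⊆ K
    · simp only [G, if_pos h1]
      have hmem : ζ ∈ interior K := by
        refine interior_mono h1 ?_
        refine Metric.ball_subset_interior_closedBall ?_
        have := hsupp j hζ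
        rw [Metric.mem_closedBall] at this
        rw [Metric.mem_ball]; linarith
      exact (hfd.contDiffOn isOpen_interior).contDiffAt (isOpen_interior.mem_nhds hmem)
    · simp only [G, if_neg h1]
      split_ifs <;> exact contDiffAt_const
  have hGd : ∀ j, ∀ ζ ∈ tsupport (φ j), DifferentiableAt ℂ (G j) ζ := fun j ζ h =>
    (hGc j ζ h).differentiableAt (by norm_num)
  have hcs : ∀ j, ContDiff ℝ 1 (fun z => φ j z • G j z) := fun j =>
    contDiff_smul_loc (hφ j) (hGc j)
  have hdb : ∀ ζ, dbar (fun z => ∑ j ∈ s, φ j z • G j z) ζ = ∑ j ∈ s, dsc (φ j) ζ • G j ζ := by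
    intro ζ
    rw [dbar_sum s _ hcs]
    exact Finset.sum_congr rfl fun j _ => dbar_smul (hφ j) (hGd j) ζ
  have hds : ∀ ζ : ℂ, ‖ζ‖ < R0 + 2 * δ → ∑ j ∈ s, dsc (φ j) ζ = 0 := by
    intro ζ hζ
    have h0 : fderiv ℝ (fun z => ∑ j ∈ s, φ j z) ζ = 0 := by
      have : (fun z => ∑ j ∈ s, φ j z) =ᶠ[𝓝 ζ] fun _ => 1 := by
        filter_upwards [(continuous_norm.isOpen_preimage _ isOpen_Iio).mem_nhds hζ] with w hw
        exact hsum w (le_of_lt hw)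
      rw [this.fderiv_eq]; simp
    rw [fderiv_fun_sum (fun i _ => (hφ i).differentiable (by norm_num) ζ)] at h0
    have e1 := congrArg (fun L => ((L (1:ℂ) : ℝ) : ℂ)) h0
    have e2 := congrArg (fun L => ((L I : ℝ) : ℂ)) h0
    simp at e1 e2
    simp only [dsc, Finset.sum_add_distrib, ← Finset.mul_sum, e1, e2]; simp
  -- key closeness
  have hclose : ∀ ζ₀ ∈ K, ∀ ζ, ‖ζ - ζ₀‖ ≤ δ → ∀ j, ζ ∈ tsupport (φ j) → ‖G j ζ - f ζ₀‖ ≤ ω := by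
    intro ζ₀ h0 ζ hζ j hj
    have hq := hsupp j hj
    rw [mem_closedBall_iff_norm] at hq
    by_cases h1 : Metric.closedBall (q j) (3 * δ) ⊆ K
    · simp only [G, if_pos h1]
      refine hω _ (h1 ?_) _ h0 (by linarith)
      rw [mem_closedBall_iff_norm]; linarith
    · have hne : (Metric.closedBall (q j) (3 * δ) ∩ K).Nonempty := by
        refine ⟨ζ₀, ?_, h0⟩
        rw [mem_closedBall_iff_norm]
        have := norm_sub_le (ζ - q j) (ζ - ζ₀)
        rw [show ζ - q j - (ζ - ζ₀) = ζ₀ - q j by ring] at this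
        linarith
      simp only [G, if_neg h1, dif_pos hne]
      have hs := hne.some_mem
      refine hω _ hs.2 _ h0 ?_
      have h2 := hs.1
      rw [mem_closedBall_iff_norm] at h2
      have h3 := norm_sub_le (hne.some - q j) (ζ - q j)
      have h4 := norm_add_le (hne.some - q j - (ζ - q j)) (ζ - ζ₀)
      rw [show hne.some - q j - (ζ - q j) + (ζ - ζ₀) = hne.some - ζ₀ by ring] at h4
      linarith
  refine ⟨fun z => ∑ j ∈ s, φ j z • G j z, ?_, ?_, ?_, ?_, ?_⟩
  · exact ContDiff.sum fun j _ => hcs j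
  · have hcomp : IsCompact (⋃ j ∈ s, Metric.closedBall (q j) (2 * δ)) :=
      s.isCompact_biUnion fun j _ => isCompact_closedBall _ _
    refine HasCompactSupport.intro hcomp fun z hz => Finset.sum_eq_zero fun j hj => ?_
    have h0 : φ j z = 0 := image_eq_zero_of_notMem_tsupport
      fun h => hz (mem_biUnion hj (hsupp j h))
    rw [h0, zero_smul]
  · intro z hz
    have h1 := hsum z (by linarith [hR0 z hz])
    have h2 : f z = ∑ j ∈ s, φ j z • f z := by rw [← Finset.sum_smul, h1, one_smul]
    have h3 : ∑ j ∈ s, φ j z • G j z - f z = ∑ j ∈ s, φ j z • (G j z - f z) := by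
      simp_rw [smul_sub]; rw [Finset.sum_sub_distrib, ← h2]
    rw [h3]
    have h4 : ω = ∑ j ∈ s, φ j z * ω := by rw [← Finset.sum_mul, h1, one_mul]
    conv_rhs => rw [h4]
    refine (norm_sum_le _ _).trans (Finset.sum_le_sum fun j _ => ?_)
    rw [norm_smul, Real.norm_of_nonneg (hφ0 j z)]
    by_cases h : φ j z = 0
    · simp [h]
    · exact mul_le_mul_of_nonneg_left (hclose z hz z (by simp [hδ.le]) j (subset_tsupport _ h))
        (hφ0 j z)
  · intro ζ₀ h0 ζ hζ
    have hn : ‖ζ‖ < R0 + 2 * δ := by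
      have := norm_add_le (ζ - ζ₀) ζ₀
      rw [sub_add_cancel] at this
      linarith [hR0 ζ₀ h0]
    have h3 : ∑ j ∈ s, dsc (φ j) ζ • G j ζ = ∑ j ∈ s, dsc (φ j) ζ • (G j ζ - f ζ₀) := by
      simp_rw [smul_sub]; rw [Finset.sum_sub_distrib, ← Finset.sum_smul, hds ζ hn]; simp
    rw [hdb, h3]
    calc _ ≤ ∑ j ∈ s, ‖dsc (φ j) ζ • (G j ζ - f ζ₀)‖ := norm_sum_le _ _
      _ ≤ ∑ j ∈ s, (2 * ‖fderiv ℝ (φ j) ζ‖) * ω := by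
        refine Finset.sum_le_sum fun j _ => ?_
        rw [norm_smul]
        by_cases h : dsc (φ j) ζ = 0
        · rw [h]; simp; positivity
        · exact mul_le_mul (norm_dsc_le _ _) (hclose ζ₀ h0 ζ hζ j (dsc_ne h)) (norm_nonneg _)
            (by positivity)
      _ = 2 * ω * ∑ j ∈ s, ‖fderiv ℝ (φ j) ζ‖ := by
        rw [Finset.mul_sum]; exact Finset.sum_congr rfl fun _ _ => by ring
      _ ≤ 2 * ω * (C / δ) := by gcongr; exact hder ζ
      _ = 2 * C * ω / δ := by ring
  · intro ζ₀ h0 ζ hζ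
    have h0K : ζ₀ ∈ K := h0 (Metric.mem_closedBall_self (by positivity))
    have hn : ‖ζ‖ < R0 + 2 * δ := by
      have := norm_add_le (ζ - ζ₀) ζ₀
      rw [sub_add_cancel] at this
      linarith [hR0 ζ₀ h0K]
    have h3 : ∑ j ∈ s, dsc (φ j) ζ • G j ζ = ∑ j ∈ s, dsc (φ j) ζ • f ζ := by
      refine Finset.sum_congr rfl fun j _ => ?_
      by_cases h : dsc (φ j) ζ = 0
      · simp [h]
      · have hq := hsupp j (dsc_ne h)
        have h1 : Metric.closedBall (q j) (3 * δ) ⊆ K := by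
          refine Subset.trans (fun w hw => ?_) h0
          rw [mem_closedBall_iff_norm] at hw hq ⊢
          have h4 := norm_add_le (w - q j - (ζ - q j)) (ζ - ζ₀)
          rw [show w - q j - (ζ - q j) + (ζ - ζ₀) = w - ζ₀ by ring] at h4
          have h5 := norm_sub_le (w - q j) (ζ - q j)
          linarith
        simp only [G, if_pos h1]
    rw [hdb, h3, ← Finset.sum_smul, hds ζ hn, zero_smul]

end Merg

namespace Merg
open Set Filter Topology MeasureTheory Complex

variable (E : Type*) [NormedAddCommGroup E] [NormedSpace ℂ E]

/-- Jets of `E`-valued polynomials. -/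
def JetPoly : Submodule ℂ (ℕ → ℂ → E) :=
  Submodule.span ℂ {J | ∃ (q : Polynomial ℂ) (e : E),
    J = fun k z => (Polynomial.derivative^[k] q).eval z • e}

variable {E}

lemma JetPoly.mk (q : Polynomial ℂ) (e : E) :
    (fun k z => (Polynomial.derivative^[k] q).eval z • e) ∈ JetPoly E :=
  Submodule.subset_span ⟨q, e, rfl⟩

/-- Uniform limits of `E`-valued polynomials on `K`. -/
def ELim (K : Set ℂ) (h : ℂ → E) : Prop :=
  ∀ ε > 0, ∃ p ∈ JetPoly E, ∀ z ∈ K, ‖h z - p 0 z‖ < ε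

lemma ELim.zero (K : Set ℂ) : ELim K (fun _ => (0 : E)) := fun ε hε =>
  ⟨0, Submodule.zero_mem _, fun z _ => by simpa using hε⟩

lemma ELim.add {K : Set ℂ} {h h' : ℂ → E} (H : ELim K h) (G : ELim K h') :
    ELim K (fun z => h z + h' z) := by
  intro ε hε
  obtain ⟨p, hp, h1⟩ := H (ε / 2) (half_pos hε)
  obtain ⟨r, hr, h2⟩ := G (ε / 2) (half_pos hε)
  refine ⟨p + r, Submodule.add_mem _ hp hr, fun z hz => ?_⟩
  rw [show h z + h' z - (p + r) 0 z = (h z - p 0 z) + (h' z - r 0 z) by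
    simp only [Pi.add_apply]; abel]
  exact (norm_add_le _ _).trans_lt (by linarith [h1 z hz, h2 z hz])

lemma ELim.smul {K : Set ℂ} [CompactSpace K] {a : ℂ → ℂ} (ha : PolyLim K a) (e : E) :
    ELim K (fun z => a z • e) := by
  intro ε hε
  obtain ⟨q, hq⟩ := ha.approx (ε := ε / (‖e‖ + 1)) (by positivity)
  refine ⟨_, JetPoly.mk q e, fun z hz => ?_⟩
  simp only [Function.iterate_zero, id]
  rw [← sub_smul, norm_smul]
  have := hq z hz
  rw [lt_div_iff₀ (by positivity)] at this
  nlinarith [norm_nonneg (a z - q.eval z)]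

lemma integrable_kernel {g : ℂ → E} (hg : Continuous g) (hs : HasCompactSupport g) (z : ℂ) :
    Integrable (fun ζ => (z - ζ)⁻¹ • g ζ) := by
  obtain ⟨B, hB⟩ := hs.exists_bound_of_continuous hg
  obtain ⟨ρ, hρ⟩ := hs.isCompact.isBounded.exists_norm_le
  have hB0 : 0 ≤ B := (norm_nonneg _).trans (hB 0)
  have hker : Integrable (fun ζ : ℂ => ker 1 ‖z - ζ‖) :=
    (ker_int one_pos).1.comp_sub_left z
  refine (hker.const_mul (B * (1 + (‖z‖ + |ρ|)) ^ 2)).mono' ?_ ?_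
  · exact ((measurable_const.sub measurable_id).inv.aestronglyMeasurable).smul
      hg.aestronglyMeasurable
  · refine Eventually.of_forall fun ζ => ?_
    by_cases h : g ζ = 0
    · rw [h, smul_zero, norm_zero]
      have := ker_nonneg (δ := 1) (norm_nonneg (z - ζ))
      positivity
    · have h1 : ‖ζ‖ ≤ ρ := hρ ζ (subset_tsupport _ h)
      have h2 : ‖z - ζ‖ ≤ ‖z‖ + |ρ| := (norm_sub_le _ _).trans (by linarith [le_abs_self ρ])
      rw [norm_smul, norm_inv, ker]
      rcases (norm_nonneg (z - ζ)).eq_or_lt with h3 | h3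
      · rw [← h3]; simp
      · rw [div_one, inv_eq_one_div, mul_one_div, div_mul_eq_mul_div, one_mul,
          div_le_div_iff₀ h3 (by positivity)]
        have h4 : (1 + ‖z - ζ‖) ^ 2 ≤ (1 + (‖z‖ + |ρ|)) ^ 2 := by gcongr
        calc ‖g ζ‖ * (‖z - ζ‖ * (1 + ‖z - ζ‖) ^ 2)
            ≤ B * (‖z - ζ‖ * (1 + (‖z‖ + |ρ|)) ^ 2) := by gcongr; exact hB ζ
          _ = _ := by ring

lemma cauchy_approx [CompleteSpace E] : ∃ C : ℝ, 0 < C ∧ ∀ (K : Set ℂ) [CompactSpace K],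
    IsConnected Kᶜ → ∀ (g : ℂ → E), Continuous g → HasCompactSupport g → ∀ δ : ℝ, 0 < δ →
    ∀ B : ℝ, 0 ≤ B → (∀ ζ₀ ∈ K, ∀ ζ, ‖ζ - ζ₀‖ ≤ δ → ‖g ζ‖ ≤ B) →
    (∀ ζ₀, Metric.closedBall ζ₀ (6 * δ) ⊆ K → ∀ ζ, ‖ζ - ζ₀‖ ≤ δ → g ζ = 0) →
    ∀ τ > 0, ∃ h, ELim K h ∧
      ∀ z ∈ K, ‖(∫ ζ, (z - ζ)⁻¹ • g ζ) - h z‖ ≤ C * B * δ + τ := by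
  obtain ⟨C, hC, hnear⟩ := kernel_near
  refine ⟨2 * Real.pi * C, by positivity, ?_⟩
  intro K _ hK g hg hs δ hδ B hB h1 h2 τ hτ
  have hgi : Integrable g := hg.integrable_of_hasCompactSupport hs
  set A := ∫ ζ, ‖g ζ‖ with hA
  have hA0 : 0 ≤ A := integral_nonneg fun _ => norm_nonneg _
  set τ' := τ / (A + 1) with hτ'
  have hτ'0 : 0 < τ' := by positivity
  let b : ℂ → ℂ → ℝ := fun z ζ => C * B * ker δ ‖z - ζ‖ + τ' * ‖g ζ‖
  have hker : ∀ z, Integrable (fun ζ : ℂ => ker δ ‖z - ζ‖) := fun z =>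
    (ker_int hδ).1.comp_sub_left z
  have hb : ∀ z, Integrable (b z) := fun z => ((hker z).const_mul _).add (hgi.norm.const_mul _)
  have hb0 : ∀ z ζ, 0 ≤ b z ζ := fun z ζ => by
    have := ker_nonneg (δ := δ) (norm_nonneg (z - ζ))
    simp only [b]; positivity
  have hki := integrable_kernel hg hs
  have main : ∃ T, MeasurableSet T ∧ tsupport g ⊆ T ∧ ∀ T' ⊆ T, MeasurableSet T' →
      ∃ h, ELim K h ∧ ∀ z ∈ K, ‖(∫ ζ in T', (z - ζ)⁻¹ • g ζ) - h z‖ ≤ ∫ ζ in T', b z ζ := by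
    refine hs.isCompact.induction_on (p := fun S => ∃ T, MeasurableSet T ∧ S ⊆ T ∧
      ∀ T' ⊆ T, MeasurableSet T' → ∃ h, ELim K h ∧ ∀ z ∈ K,
        ‖(∫ ζ in T', (z - ζ)⁻¹ • g ζ) - h z‖ ≤ ∫ ζ in T', b z ζ) ?_ ?_ ?_ ?_
    · refine ⟨∅, MeasurableSet.empty, le_rfl, fun T' hT' _ => ⟨_, ELim.zero K, fun z _ => ?_⟩⟩
      rw [subset_empty_iff.1 hT']; simp
    · rintro s t hst ⟨T, hT, htT, H⟩
      exact ⟨T, hT, hst.trans htT, H⟩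
    · rintro s t ⟨T, hT, hsT, H⟩ ⟨U, hU, htU, H2⟩
      refine ⟨T ∪ U, hT.union hU, union_subset_union hsT htU, fun T' hT' hm => ?_⟩
      obtain ⟨h, hh, hb1⟩ := H (T' ∩ T) inter_subset_right (hm.inter hT)
      obtain ⟨h', hh', hb2⟩ := H2 (T' \ T) (fun x hx => (hT' hx.1).resolve_left hx.2) (hm.diff hT)
      refine ⟨_, hh.add hh', fun z hz => ?_⟩
      rw [← integral_inter_add_sdiff hT (hki z).integrableOn,
        ← integral_inter_add_sdiff hT (hb z).integrableOn, add_sub_add_comm]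
      exact (norm_add_le _ _).trans (add_le_add (hb1 z hz) (hb2 z hz))
    · intro ζ₀ _
      by_cases h0 : ζ₀ ∈ K
      · by_cases h6 : Metric.closedBall ζ₀ (6 * δ) ⊆ K
        · refine ⟨Metric.ball ζ₀ δ, mem_nhdsWithin_of_mem_nhds (Metric.ball_mem_nhds _ hδ),
            Metric.ball ζ₀ δ, measurableSet_ball, le_rfl, fun T' hT' hm =>
            ⟨_, ELim.zero K, fun z _ => ?_⟩⟩
          rw [setIntegral_congr_fun hm (g := fun _ => (0:E))]
          · simp only [integral_zero, sub_zero, norm_zero]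
            exact integral_nonneg fun ζ => hb0 z ζ
          · intro ζ hζ
            have := hT' hζ
            rw [mem_ball_iff_norm] at this
            simp [h2 ζ₀ h6 ζ this.le]
        · obtain ⟨p, hp, hpK⟩ := not_subset.1 h6
          rw [mem_closedBall_iff_norm] at hp
          obtain ⟨a, c, ha, hc, H⟩ := hnear K hK δ hδ p hpK ζ₀ (by linarith)
          refine ⟨Metric.ball ζ₀ δ, mem_nhdsWithin_of_mem_nhds (Metric.ball_mem_nhds _ hδ),
            Metric.ball ζ₀ δ, measurableSet_ball, le_rfl, fun T' hT' hm =>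
            ⟨_, (ELim.smul ha (∫ ζ in T', g ζ)).add (ELim.smul hc (∫ ζ in T', ζ • g ζ)),
              fun z hz => ?_⟩⟩
          have hgi2 : Integrable (fun ζ : ℂ => ζ • g ζ) :=
            (continuous_id.smul hg).integrable_of_hasCompactSupport hs.smul_left
          have i1 : IntegrableOn (fun ζ => a z • g ζ) T' := hgi.integrableOn.smul (a z)
          have i2 : IntegrableOn (fun ζ => c z • ζ • g ζ) T' := hgi2.integrableOn.smul (c z)
          have i3 : IntegrableOn (fun ζ => a z • g ζ + c z • ζ • g ζ) T' := i1.add i2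
          rw [← integral_smul, ← integral_smul, ← integral_add i1 i2,
            ← integral_sub (hki z).integrableOn i3]
          refine norm_integral_le_of_norm_le (hb z).integrableOn ?_
          have hne : ∀ᵐ ζ : ℂ, ζ ≠ z := by
            rw [ae_iff]; simp
          filter_upwards [ae_restrict_of_ae hne, ae_restrict_mem hm] with ζ hζ hζT
          have hd := hT' hζT
          rw [mem_ball_iff_norm] at hd
          have e1 : (z - ζ)⁻¹ • g ζ - (a z • g ζ + c z • ζ • g ζ) =
              (1 / (z - ζ) - (a z + ζ * c z)) • g ζ := by
            rw [one_div]; module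
          rw [e1, norm_smul]
          have e2 := H ζ hd.le z hz hζ.symm
          have e3 := h1 ζ₀ h0 ζ hd.le
          have e4 := ker_nonneg (δ := δ) (norm_nonneg (z - ζ))
          calc _ ≤ (C * ker δ ‖z - ζ‖) * B := by gcongr
            _ = C * B * ker δ ‖z - ζ‖ := by ring
            _ ≤ b z ζ := by simp only [b]; linarith [mul_nonneg hτ'0.le (norm_nonneg (g ζ))]
      · obtain ⟨a, ha, ρ, hρ, H⟩ := kernel_far K hK h0 hτ'0
        refine ⟨Metric.ball ζ₀ ρ, mem_nhdsWithin_of_mem_nhds (Metric.ball_mem_nhds _ hρ),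
          Metric.ball ζ₀ ρ, measurableSet_ball, le_rfl, fun T' hT' hm =>
          ⟨_, ELim.smul ha (∫ ζ in T', g ζ), fun z hz => ?_⟩⟩
        have i1 : IntegrableOn (fun ζ => a z • g ζ) T' := hgi.integrableOn.smul (a z)
        rw [← integral_smul, ← integral_sub (hki z).integrableOn i1]
        refine norm_integral_le_of_norm_le (hb z).integrableOn ?_
        filter_upwards [ae_restrict_mem hm] with ζ hζT
        have hd := hT' hζT
        rw [mem_ball_iff_norm] at hd
        rw [← sub_smul, norm_smul, inv_eq_one_div]
        have e2 := H ζ hd z hz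
        have e4 := ker_nonneg (δ := δ) (norm_nonneg (z - ζ))
        calc _ ≤ τ' * ‖g ζ‖ := by gcongr
          _ ≤ b z ζ := by simp only [b]; linarith [mul_nonneg (mul_nonneg hC.le hB) e4]
  obtain ⟨T, hT, hsT, H⟩ := main
  obtain ⟨h, hh, hz⟩ := H T le_rfl hT
  refine ⟨h, hh, fun z hzK => ?_⟩
  have e1 : ∫ ζ in T, (z - ζ)⁻¹ • g ζ = ∫ ζ, (z - ζ)⁻¹ • g ζ := by
    refine setIntegral_eq_integral_of_forall_compl_eq_zero fun ζ hζ => ?_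
    have : g ζ = 0 := image_eq_zero_of_notMem_tsupport fun h => hζ (hsT h)
    rw [this, smul_zero]
  rw [← e1]
  refine (hz z hzK).trans ?_
  refine (setIntegral_le_integral (hb z) (Eventually.of_forall (hb0 z))).trans ?_
  have e2 : ∫ ζ, b z ζ = C * B * (2 * Real.pi * δ) + τ' * A := by
    simp only [b]
    rw [integral_add ((hker z).const_mul _) (hgi.norm.const_mul _), integral_const_mul,
      integral_const_mul, ← (ker_int hδ).2, integral_sub_left_eq_self (fun ζ : ℂ => ker δ ‖ζ‖)]
  rw [e2]
  have e3 : τ' * A ≤ τ := by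
    rw [hτ', div_mul_eq_mul_div, div_le_iff₀ (by positivity)]; nlinarith
  linarith

/-- Banach-valued Mergelyan theorem. -/
theorem mergelyan [CompleteSpace E] {K : Set ℂ} (hKc : IsCompact K) (hK : IsConnected Kᶜ)
    {f : ℂ → E} (hf : ContinuousOn f K) (hfd : DifferentiableOn ℂ f (interior K)) :
    ELim K f := by
  have : CompactSpace K := isCompact_iff_compactSpace.1 hKc
  obtain ⟨C1, hC1, hsm⟩ := smoothing (E := E)
  obtain ⟨C2, hC2, hca⟩ := cauchy_approx (E := E)
  intro ε hε
  set ω := ε / (4 * (1 + C1 * C2)) with hω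
  have hω0 : 0 < ω := by positivity
  obtain ⟨η, hη, huc⟩ := Metric.uniformContinuousOn_iff_le.1
    (hKc.uniformContinuousOn_of_continuous hf) ω hω0
  set δ := η / 6 with hδ
  have hδ0 : 0 < δ := by positivity
  obtain ⟨F, hF1, hF2, hF3, hF4, hF5⟩ := hsm K hKc f hfd δ hδ0 ω hω0.le (fun a ha b hb hab => by
    have := huc a ha b hb (by rw [dist_eq_norm]; rw [hδ] at hab; linarith)
    rwa [dist_eq_norm] at this)
  have hds : HasCompactSupport (dbar F) := by
    refine hF2.mono' fun ζ hζ => support_fderiv_subset ℝ fun h0 => hζ ?_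
    simp [dbar, h0]
  obtain ⟨h, hh, hz⟩ := hca K hK (dbar F) (dbar_continuous hF1) hds δ hδ0 (C1 * ω / δ)
    (by positivity) hF4 hF5 ω hω0
  have hl : ELim K (fun z => (2 * Real.pi : ℂ)⁻¹ • h z) := by
    intro ε hε
    obtain ⟨p, hp, H⟩ := hh ε hε
    refine ⟨(2 * Real.pi : ℂ)⁻¹ • p, Submodule.smul_mem _ _ hp, fun z hz => ?_⟩
    simp only [Pi.smul_apply]
    rw [← smul_sub, norm_smul]
    refine lt_of_le_of_lt ?_ (H z hz)
    refine mul_le_of_le_one_left (norm_nonneg _) ?_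
    rw [norm_inv]
    apply inv_le_one_of_one_le₀
    simp [abs_of_pos Real.pi_pos]
    linarith [Real.pi_gt_three]
  obtain ⟨p, hp, H⟩ := hl (ε / 4) (by positivity)
  refine ⟨p, hp, fun z hzK => ?_⟩
  have e1 := H z hzK
  have e2 := hF3 z hzK
  have e3 : ‖F z - (2 * Real.pi : ℂ)⁻¹ • h z‖ ≤ C2 * (C1 * ω / δ) * δ + ω := by
    refine le_trans ?_ (hz z hzK)
    rw [pompeiu hF1 hF2 z]
    have hp0 : (2 * Real.pi : ℂ) ≠ 0 := by
      simp [Real.pi_ne_zero]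
    have : F z - (2 * Real.pi : ℂ)⁻¹ • h z = (2 * Real.pi : ℂ)⁻¹ • ((2 * Real.pi : ℂ) • F z - h z) := by
      rw [smul_sub, inv_smul_smul₀ hp0]
    rw [this, norm_smul]
    refine mul_le_of_le_one_left (norm_nonneg _) ?_
    rw [norm_inv]
    apply inv_le_one_of_one_le₀
    simp [abs_of_pos Real.pi_pos]
    linarith [Real.pi_gt_three]
  have e4 : C2 * (C1 * ω / δ) * δ + ω = (1 + C1 * C2) * ω := by
    field_simp; ring
  have e5 : (1 + C1 * C2) * ω = ε / 4 := by rw [hω]; field_simp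
  have e6 : ω ≤ ε / 4 := by rw [← e5]; nlinarith [mul_pos hC1 hC2]
  have e7 : f z - p 0 z = -(F z - f z) + (F z - (2 * Real.pi : ℂ)⁻¹ • h z) +
    ((2 * Real.pi : ℂ)⁻¹ • h z - p 0 z) := by abel
  rw [e7]
  have e8 := norm_add₃_le (a := -(F z - f z)) (b := F z - (2 * Real.pi : ℂ)⁻¹ • h z)
    (c := (2 * Real.pi : ℂ)⁻¹ • h z - p 0 z)
  rw [norm_neg] at e8
  linarith

end Merg

namespace Merg
open Set Filter Topology MeasureTheory Complex

variable {E : Type*} [NormedAddCommGroup E] [NormedSpace ℂ E]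

lemma path_bound {Ω : Set ℂ} (hΩ : IsOpen Ω) {M : ℝ} {z w : ℂ} (hj : JoinedLe Ω M z w)
    {h h' : ℂ → E} (hd : ∀ z ∈ Ω, HasDerivAt h (h' z) z) {c : ℝ} (hc : 0 ≤ c)
    (hb : ∀ z ∈ Ω, ‖h' z‖ ≤ c) : ‖h w - h z‖ ≤ c * max M 0 := by
  obtain ⟨γ, hγ, h0, h1, hin, hv⟩ := hj
  have himg : γ '' Icc 0 1 ⊆ Ω := image_subset_iff.2 hin
  obtain ⟨r, hr, hthick⟩ := (isCompact_Icc.image_of_continuousOn hγ).exists_thickening_subset_open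
    hΩ himg
  obtain ⟨η, hη, huc⟩ := Metric.uniformContinuousOn_iff.1
    (isCompact_Icc.uniformContinuousOn_of_continuous hγ) r hr
  obtain ⟨N, hN⟩ := exists_nat_gt (1 / η)
  have hNpos : (0:ℝ) < N := lt_trans (by positivity) hN
  have hN1 : 1 / (N:ℝ) < η := by rwa [one_div_lt hNpos hη]
  let u : ℕ → ℝ := fun i => min (i / N : ℝ) 1
  have hu : ∀ i, u i ∈ Icc (0:ℝ) 1 := fun i => ⟨le_min (by positivity) zero_le_one, min_le_right _ _⟩
  have hmono : Monotone u := by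
    intro i j hij
    exact min_le_min_right _ (by gcongr)
  have hu0 : u 0 = 0 := by simp [u]
  have huN : u N = 1 := by simp [u, hNpos.ne']
  have hsum := eVariationOn.sum_le (f := γ) (s := Icc 0 1) (n := N) hmono hu
  have hstep : ∀ i, dist (h (γ (u i))) (h (γ (u (i + 1)))) ≤ c * dist (γ (u (i+1))) (γ (u i)) := by
    intro i
    have hsub : Metric.ball (γ (u i)) r ⊆ Ω := fun x hx =>
      hthick (Metric.mem_thickening_iff.2 ⟨_, mem_image_of_mem _ (hu i), hx⟩)
    have hdist : dist (u (i+1)) (u i) < η := by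
      rw [Real.dist_eq]
      refine lt_of_le_of_lt ?_ hN1
      simp only [u]
      refine (abs_min_sub_min_le_max _ _ _ _).trans ?_
      push_cast
      rw [sub_self, abs_zero, ← sub_div, add_sub_cancel_left, abs_of_nonneg (by positivity)]
      simp
    have hmem := huc _ (hu (i+1)) _ (hu i) hdist
    have := (convex_ball (γ (u i)) r).norm_image_sub_le_of_norm_hasDerivWithin_le
      (fun x hx => (hd x (hsub hx)).hasDerivWithinAt) (fun x hx => hb x (hsub hx))
      (Metric.mem_ball_self hr) hmem
    rw [dist_comm, dist_eq_norm, dist_eq_norm]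
    exact this
  have hsum2 : ∑ i ∈ Finset.range N, dist (γ (u (i+1))) (γ (u i)) ≤ max M 0 := by
    have h3 := hsum.trans hv
    simp only [edist_dist] at h3
    rw [← ENNReal.ofReal_sum_of_nonneg (fun _ _ => dist_nonneg)] at h3
    rcases le_total M 0 with hM | hM
    · rw [ENNReal.ofReal_of_nonpos hM] at h3
      exact (ENNReal.ofReal_eq_zero.1 (le_antisymm h3 zero_le)).trans (le_max_right _ _)
    · exact ((ENNReal.ofReal_le_ofReal_iff hM).1 h3).trans (le_max_left _ _)
  have hd := dist_le_range_sum_dist (fun i => h (γ (u i))) N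
  simp only [hu0, huN, h0, h1] at hd
  rw [← dist_eq_norm, dist_comm]
  refine hd.trans ((Finset.sum_le_sum fun i _ => hstep i).trans ?_)
  rw [← Finset.mul_sum]
  gcongr

lemma JetPoly.hasDerivAt {p : ℕ → ℂ → E} (hp : p ∈ JetPoly E) (k : ℕ) (z : ℂ) :
    HasDerivAt (p k) (p (k + 1) z) z := by
  induction hp using Submodule.span_induction with
  | mem x hx =>
    obtain ⟨q, e, rfl⟩ := hx
    simp only [Function.iterate_succ_apply']
    exact (Polynomial.hasDerivAt _ z).smul_const e
  | zero => exact hasDerivAt_const z 0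
  | add x y _ _ hx hy => exact hx.add hy
  | smul a x _ hx => exact hx.const_smul a

lemma exists_antideriv (q : Polynomial ℂ) : ∃ Q : Polynomial ℂ, Polynomial.derivative Q = q := by
  induction q using Polynomial.induction_on' with
  | add p q hp hq =>
    obtain ⟨P, rfl⟩ := hp
    obtain ⟨Q, rfl⟩ := hq
    exact ⟨P + Q, by simp⟩
  | monomial n a =>
    refine ⟨Polynomial.monomial (n + 1) (a / (n + 1)), ?_⟩
    rw [Polynomial.derivative_monomial]
    congr 1
    have : (n:ℂ) + 1 ≠ 0 := by exact_mod_cast n.succ_ne_zero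
    push_cast
    field_simp

lemma JetPoly.antideriv {p : ℕ → ℂ → E} (hp : p ∈ JetPoly E) :
    ∃ P ∈ JetPoly E, ∀ k z, P (k + 1) z = p k z := by
  induction hp using Submodule.span_induction with
  | mem x hx =>
    obtain ⟨q, e, rfl⟩ := hx
    obtain ⟨Q, hQ⟩ := exists_antideriv q
    refine ⟨_, JetPoly.mk Q e, fun k z => ?_⟩
    simp only [Function.iterate_succ_apply, hQ]
  | zero => exact ⟨0, Submodule.zero_mem _, fun _ _ => rfl⟩
  | add x y _ _ hx hy =>
    obtain ⟨P, hP, h1⟩ := hx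
    obtain ⟨Q, hQ, h2⟩ := hy
    exact ⟨P + Q, Submodule.add_mem _ hP hQ, fun k z => by simp [h1, h2]⟩
  | smul a x _ hx =>
    obtain ⟨P, hP, h1⟩ := hx
    exact ⟨a • P, Submodule.smul_mem _ _ hP, fun k z => by simp [h1]⟩

lemma JetPoly.continuous {p : ℕ → ℂ → E} (hp : p ∈ JetPoly E) (k : ℕ) : Continuous (p k) :=
  continuous_iff_continuousAt.2 fun z => (JetPoly.hasDerivAt hp k z).continuousAt

theorem jet_approx [CompleteSpace E] {Ω : Set ℂ} (hΩo : IsOpen Ω) (hne : Ω.Nonempty)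
    (hΩb : Bornology.IsBounded Ω) (hreg : interior (closure Ω) = Ω)
    (hcc : IsConnected (closure Ω)ᶜ) {M : ℝ} (hjoin : ∀ z ∈ Ω, ∀ w ∈ Ω, JoinedLe Ω M z w)
    (n : ℕ) : ∀ (F : ℕ → ℂ → E), (∀ k ≤ n, ContinuousOn (F k) (closure Ω)) →
    (∀ k < n, ∀ z ∈ Ω, HasDerivAt (F k) (F (k + 1) z) z) → DifferentiableOn ℂ (F n) Ω →
    ∀ ε > 0, ∃ p ∈ JetPoly E, ∀ k ≤ n, ∀ z ∈ closure Ω, ‖F k z - p k z‖ < ε := by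
  have hcomp : IsCompact (closure Ω) := hΩb.isCompact_closure
  induction n with
  | zero =>
    intro F hc _ hd ε hε
    obtain ⟨p, hp, H⟩ := mergelyan hcomp hcc (hc 0 le_rfl) (by rwa [hreg]) ε hε
    refine ⟨p, hp, fun k hk => ?_⟩
    obtain rfl : k = 0 := by omega
    exact H
  | succ n ih =>
    intro F hc hder hd ε hε
    set M' := max M 0 with hM'
    have hM0 : 0 ≤ M' := le_max_right _ _
    set c := ε / (2 * (M' + 1)) with hcdef
    have hc0 : 0 < c := by positivity
    obtain ⟨p, hp, H⟩ := ih (fun k => F (k + 1)) (fun k hk => hc _ (by omega))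
      (fun k hk => hder (k + 1) (by omega)) hd c hc0
    obtain ⟨P, hP, hPp⟩ := JetPoly.antideriv hp
    obtain ⟨z0, hz0⟩ := hne
    set Q : ℕ → ℂ → E := P + fun k z => (Polynomial.derivative^[k] (1 : Polynomial ℂ)).eval z •
      (F 0 z0 - P 0 z0) with hQdef
    have hQ : Q ∈ JetPoly E := Submodule.add_mem _ hP (JetPoly.mk 1 _)
    have hQ1 : ∀ k z, Q (k + 1) z = p k z := by
      intro k z
      simp [hQdef, Function.iterate_succ_apply, hPp]
    have hQ0 : Q 0 z0 = F 0 z0 := by simp [hQdef]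
    have hcε : c < ε := by
      rw [hcdef, div_lt_iff₀ (by positivity)]; nlinarith
    refine ⟨Q, hQ, fun k hk z hz => ?_⟩
    rcases k with _ | k
    · have hΩle : ∀ w ∈ Ω, ‖F 0 w - Q 0 w‖ ≤ c * M' := by
        intro w hw
        have := path_bound hΩo (hjoin z0 hz0 w hw) (h := fun z => F 0 z - Q 0 z)
          (h' := fun z => F 1 z - Q 1 z)
          (fun z hz => (hder 0 (by omega) z hz).sub (JetPoly.hasDerivAt hQ 0 z)) hc0.le
          (fun z hz => by
            rw [show (1:ℕ) = 0 + 1 from rfl, hQ1]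
            exact (H 0 (by omega) z (subset_closure hz)).le)
        simpa [hQ0] using this
      have hle : ‖F 0 z - Q 0 z‖ ≤ c * M' := by
        have hco : ContinuousOn (fun z => ‖F 0 z - Q 0 z‖) (closure Ω) :=
          ((hc 0 (by omega)).sub (JetPoly.continuous hQ 0).continuousOn).norm
        exact le_on_closure hΩle hco continuousOn_const hz
      refine hle.trans_lt ?_
      rw [hcdef, div_mul_eq_mul_div, div_lt_iff₀ (by positivity)]; nlinarith
    · rw [hQ1]
      exact (H k (by omega) z hz).trans hcε

end Merg

set_option linter.unusedSectionVars false
namespace Merg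
open Set Filter Topology MeasureTheory Complex

lemma diff_of_sep {E : Type*} [NormedAddCommGroup E] [NormedSpace ℂ E] [CompleteSpace E]
    {Ω : Set ℂ} (hΩ : IsOpen Ω) {Φ : ℂ → E} (hc : ContinuousOn Φ Ω) {I : Type*}
    (L : I → E →L[ℂ] ℂ) (hsep : ∀ e, (∀ i, L i e = 0) → e = 0)
    (hd : ∀ i, DifferentiableOn ℂ (fun z => L i (Φ z)) Ω) : DifferentiableOn ℂ Φ Ω := by
  intro z0 hz0
  obtain ⟨R, hR, hball⟩ := Metric.nhds_basis_closedBall.mem_iff.1 (hΩ.mem_nhds hz0)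
  have hcs : ContinuousOn Φ (Metric.sphere z0 R) :=
    hc.mono (Metric.sphere_subset_closedBall.trans hball)
  have hci : CircleIntegrable Φ z0 R := hcs.circleIntegrable hR.le
  lift R to NNReal using hR.le
  have hps := hasFPowerSeriesOn_cauchy_integral hci (by exact_mod_cast hR)
  have hda := hps.hasFPowerSeriesAt.differentiableAt
  refine (hda.congr_of_eventuallyEq ?_).differentiableWithinAt
  filter_upwards [Metric.ball_mem_nhds z0 hR] with w hw
  rw [← sub_eq_zero]
  apply hsep
  intro i
  rw [map_sub, map_smul, sub_eq_zero]
  have h1 : L i (∮ z in C(z0, R), (z - w)⁻¹ • Φ z) = ∮ z in C(z0, R), (z - w)⁻¹ • L i (Φ z) := by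
    unfold circleIntegral
    rw [← ContinuousLinearMap.intervalIntegral_comp_comm]
    · simp
    · have : CircleIntegrable (fun z => (z - w)⁻¹ • Φ z) z0 R := by
        apply ContinuousOn.circleIntegrable hR.le
        apply ContinuousOn.smul _ hcs
        apply ContinuousOn.inv₀ (by fun_prop)
        intro z hz h
        rw [sub_eq_zero] at h
        subst h
        rw [Metric.mem_sphere] at hz
        rw [Metric.mem_ball] at hw
        linarith
      exact this.out
  rw [h1]
  have := (DifferentiableOn.circleIntegral_sub_inv_smul ((hd i).mono hball) hw)
  rw [this, smul_smul, inv_mul_cancel₀ Complex.two_pi_I_ne_zero, one_smul]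

def JetApprox (Ω : Set ℂ) (n : ℕ) : Prop :=
  ∀ (E : Type) [NormedAddCommGroup E] [NormedSpace ℂ E] [CompleteSpace E],
    ∀ F : ℕ → ℂ → E, (∀ k ≤ n, ContinuousOn (F k) (closure Ω)) →
    (∀ k < n, ∀ z ∈ Ω, HasDerivAt (F k) (F (k+1) z) z) → DifferentiableOn ℂ (F n) Ω →
    ∀ ε > 0, ∃ p ∈ JetPoly E, ∀ k ≤ n, ∀ z ∈ closure Ω, ‖F k z - p k z‖ < ε

section prod
variable {ι : Type} [Fintype ι] [DecidableEq ι]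

abbrev Z (Ω : ι → Set ℂ) (n : ℕ) : Type := (i : ι) → (closure (Ω i)) × Fin (n+1)

noncomputable def jetZ (Ω : ι → Set ℂ) (n : ℕ) (i : ι) (q : Polynomial ℂ) : C(Z Ω n, ℂ) :=
  ⟨fun x => (Polynomial.derivative^[((x i).2 : ℕ)] q).eval ((x i).1 : ℂ), by
    have : Continuous (fun y : (closure (Ω i)) × Fin (n+1) =>
        (Polynomial.derivative^[(y.2 : ℕ)] q).eval (y.1 : ℂ)) := by
      rw [continuous_prod_of_discrete_right]
      intro b
      exact (Polynomial.derivative^[(b : ℕ)] q).continuous.comp continuous_subtype_val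
    exact this.comp (continuous_apply i)⟩

noncomputable def T (Ω : ι → Set ℂ) (n : ℕ) (s : Finset ι) : Submodule ℂ C(Z Ω n, ℂ) :=
  Submodule.span ℂ (range fun q : ι → Polynomial ℂ => ∏ i ∈ s, jetZ Ω n i (q i))

variable (Ω : ι → Set ℂ) [∀ i, CompactSpace (closure (Ω i))] (n : ℕ)

noncomputable def S (s : Finset ι) : Submodule ℂ C(Z Ω n, ℂ) := (T Ω n s).topologicalClosure

lemma mul_mem_S {s : Finset ι} {i : ι} (hi : i ∉ s) (q : Polynomial ℂ) {e : C(Z Ω n, ℂ)}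
    (he : e ∈ S Ω n s) : jetZ Ω n i q * e ∈ S Ω n (insert i s) := by
  have h1 : Continuous (fun e : C(Z Ω n, ℂ) => jetZ Ω n i q * e) := by fun_prop
  refine map_mem_closure h1 (s := (T Ω n s : Set C(Z Ω n, ℂ))) he ?_
  intro e he
  induction he using Submodule.span_induction with
  | mem x h =>
    obtain ⟨q', rfl⟩ := h
    apply Submodule.subset_span
    refine ⟨Function.update q' i q, ?_⟩
    simp only
    rw [Finset.prod_insert hi]
    congr 1
    · simp
    · apply Finset.prod_congr rfl
      intro j hj
      rw [Function.update_of_ne]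
      rintro rfl; exact hi hj
  | zero => rw [mul_zero]; exact zero_mem _
  | add x y _ _ hx hy => rw [mul_add]; exact add_mem hx hy
  | smul a x _ hx =>
    have : jetZ Ω n i q * a • x = a • (jetZ Ω n i q * x) := by
      rw [mul_smul_comm]
    rw [this]
    exact Submodule.smul_mem _ _ hx

lemma dense_D : Dense {x : Z Ω n | ∀ i, ((x i).1 : ℂ) ∈ Ω i} := by
  have : {x : Z Ω n | ∀ i, ((x i).1 : ℂ) ∈ Ω i} =
      Set.pi univ (fun i => Prod.fst ⁻¹' ((↑) ⁻¹' (Ω i) : Set (closure (Ω i)))) := by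
    ext x; simp
  rw [this]
  apply dense_pi
  intro i _
  apply Dense.preimage _ isOpenMap_fst
  rw [Subtype.dense_iff]
  rw [Subtype.image_preimage_coe, inter_eq_right.2 subset_closure]

noncomputable def slice (J : C(Z Ω n, ℂ)) (s : Finset ι) : C(Z Ω n, C(Z Ω n, ℂ)) :=
  ContinuousMap.curry ⟨fun p : Z Ω n × Z Ω n => J (s.piecewise p.2 p.1), by
    apply J.continuous.comp
    apply continuous_pi
    intro i
    by_cases h : i ∈ s
    · simp only [h, Finset.piecewise_eq_of_mem]; fun_prop
    · simp only [h, not_false_iff, Finset.piecewise_eq_of_notMem]; fun_prop⟩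

lemma slice_apply (J : C(Z Ω n, ℂ)) (s : Finset ι) (b x : Z Ω n) :
    slice Ω n J s b x = J (s.piecewise x b) := rfl

lemma lift_jetpoly {s : Finset ι} {i : ι} (hi : i ∉ s) {p : ℕ → ℂ → S Ω n s}
    (hp : p ∈ JetPoly (S Ω n s)) : ∃ e ∈ S Ω n (insert i s), ∀ x : Z Ω n,
      e x = (p ((x i).2 : ℕ) ((x i).1 : ℂ) : C(Z Ω n, ℂ)) x := by
  induction hp using Submodule.span_induction with
  | mem p h =>
    obtain ⟨q, e, rfl⟩ := h
    exact ⟨_, mul_mem_S Ω n hi q e.2, fun x => by simp [jetZ]⟩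
  | zero => exact ⟨0, zero_mem _, fun x => by simp⟩
  | add x y _ _ hx hy =>
    obtain ⟨e, he, h⟩ := hx
    obtain ⟨e', he', h'⟩ := hy
    exact ⟨e + e', add_mem he he', fun x => by simp [h, h']⟩
  | smul a x _ hx =>
    obtain ⟨e, he, h⟩ := hx
    exact ⟨a • e, Submodule.smul_mem _ _ he, fun x => by simp [h]⟩

theorem prod_approx (hΩo : ∀ i, IsOpen (Ω i)) (hJA : ∀ i, JetApprox (Ω i) n)
    (Jf : (ι → ℂ) → (ι → ℕ) → ℂ) (J : C(Z Ω n, ℂ))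
    (hJ : ∀ x, J x = Jf (fun i => (x i).1) (fun i => (x i).2))
    (h1 : ∀ z, (∀ i, z i ∈ Ω i) → ∀ α, (∀ i, α i ≤ n) → ∀ i, α i < n →
      HasDerivAt (fun w => Jf (Function.update z i w) α)
        (Jf z (Function.update α i (α i + 1))) (z i))
    (h2 : ∀ z, (∀ i, z i ∈ Ω i) → ∀ α, (∀ i, α i ≤ n) → ∀ i, α i = n →
      DifferentiableAt ℂ (fun w => Jf (Function.update z i w) α) (z i)) :
    J ∈ S Ω n Finset.univ := by
  classical
  have key : ∀ s : Finset ι, ∀ b, slice Ω n J s b ∈ S Ω n s := by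
    intro s
    induction s using Finset.induction_on with
    | empty =>
      intro b
      apply Submodule.le_topologicalClosure
      have : slice Ω n J ∅ b = (J b) • ∏ i ∈ (∅ : Finset ι), jetZ Ω n i 0 := by
        ext x; simp [slice_apply]
      rw [this]
      exact Submodule.smul_mem _ _ (Submodule.subset_span ⟨fun _ => 0, rfl⟩)
    | insert i s hi ih =>
      have hclosed : IsClosed {b | slice Ω n J (insert i s) b ∈ S Ω n (insert i s)} :=
        (Submodule.isClosed_topologicalClosure _).preimage (slice Ω n J (insert i s)).continuous
      suffices hD : {x : Z Ω n | ∀ i, ((x i).1 : ℂ) ∈ Ω i} ⊆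
          {b | slice Ω n J (insert i s) b ∈ S Ω n (insert i s)} by
        intro b
        exact hclosed.closure_subset_iff.2 hD (dense_D Ω n b)
      intro b hb
      have : CompleteSpace (S Ω n s) :=
        (Submodule.isClosed_topologicalClosure (T Ω n s)).completeSpace_coe
      let F : ℕ → ℂ → S Ω n s := fun k w => if h : w ∈ closure (Ω i) ∧ k ≤ n then
        ⟨slice Ω n J s (Function.update b i (⟨w, h.1⟩, ⟨k, Nat.lt_succ_of_le h.2⟩)), ih _⟩ else 0
      have hF : ∀ k (hk : k ≤ n) w (hw : w ∈ closure (Ω i)), F k w =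
        ⟨slice Ω n J s (Function.update b i (⟨w, hw⟩, ⟨k, Nat.lt_succ_of_le hk⟩)), ih _⟩ := by
        intro k hk w hw
        simp only [F]
        rw [dif_pos ⟨hw, hk⟩]
      have hFc : ∀ k ≤ n, ContinuousOn (F k) (closure (Ω i)) := by
        intro k hk
        rw [continuousOn_iff_continuous_domRestrict]
        have : (closure (Ω i)).domRestrict (F k) = fun w => ⟨slice Ω n J s
            (Function.update b i (w, ⟨k, Nat.lt_succ_of_le hk⟩)), ih _⟩ := by
          funext w
          rw [domRestrict_apply, hF k hk w w.2]
        rw [this]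
        apply Continuous.subtype_mk
        apply (slice Ω n J s).continuous.comp
        exact continuous_const.update i (by fun_prop)
      let L : {x : Z Ω n | ∀ i, ((x i).1 : ℂ) ∈ Ω i} → (S Ω n s) →L[ℂ] ℂ := fun x =>
        (ContinuousMap.evalCLM ℂ (x : Z Ω n)).comp (S Ω n s).subtypeL
      have hL : ∀ x e, L x e = (e : C(Z Ω n, ℂ)) x := fun x e => rfl
      have hsep : ∀ e, (∀ x, L x e = 0) → e = 0 := by
        intro e he
        apply Subtype.ext
        apply DFunLike.coe_injective
        apply Continuous.ext_on (dense_D Ω n) (map_continuous _) (map_continuous _)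
        intro x hx
        exact he ⟨x, hx⟩
      have hLF : ∀ x, ∀ k ≤ n, ∀ w ∈ Ω i, L x (F k w) =
          Jf (Function.update (fun j => ((s.piecewise x.1 b j).1 : ℂ)) i w)
            (Function.update (fun j => ((s.piecewise x.1 b j).2 : ℕ)) i k) := by
        intro x k hk w hw
        rw [hF k hk w (subset_closure hw), hL]
        simp only
        rw [slice_apply, hJ, ← Finset.update_piecewise_of_notMem _ _ _ hi]
        congr 1
        · funext j
          by_cases h : j = i
          · subst h; simp
          · simp [h]
        · funext j
          by_cases h : j = i
          · subst h; simp
          · simp [h]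
      have hz : ∀ x : {x : Z Ω n | ∀ i, ((x i).1 : ℂ) ∈ Ω i}, ∀ w ∈ Ω i, ∀ j,
          Function.update (fun j => ((s.piecewise x.1 b j).1 : ℂ)) i w j ∈ Ω j := by
        intro x w hw j
        by_cases h : j = i
        · subst h; simpa using hw
        · rw [Function.update_of_ne h]
          by_cases h' : j ∈ s
          · simpa [h'] using x.2 j
          · simpa [h'] using hb j
      have hα : ∀ x : {x : Z Ω n | ∀ i, ((x i).1 : ℂ) ∈ Ω i}, ∀ k ≤ n, ∀ j,
          Function.update (fun j => ((s.piecewise x.1 b j).2 : ℕ)) i k j ≤ n := by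
        intro x k hk j
        by_cases h : j = i
        · subst h; simpa using hk
        · rw [Function.update_of_ne h]
          exact Nat.le_of_lt_succ (s.piecewise x.1 b j).2.2
      have hev : ∀ x, ∀ k ≤ n, ∀ w ∈ Ω i, (fun w => L x (F k w)) =ᶠ[𝓝 w] (fun w =>
          Jf (Function.update (fun j => ((s.piecewise x.1 b j).1 : ℂ)) i w)
            (Function.update (fun j => ((s.piecewise x.1 b j).2 : ℕ)) i k)) := by
        intro x k hk w hw
        filter_upwards [(hΩo i).mem_nhds hw] with w' hw' using hLF x k hk w' hw'
      have hder : ∀ x, ∀ k < n, ∀ w ∈ Ω i, HasDerivAt (fun w => L x (F k w)) (L x (F (k+1) w)) w := by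
        intro x k hk w hw
        have := h1 _ (hz x w hw) _ (hα x k hk.le) i (by simpa using hk)
        simp only [Function.update_idem, Function.update_self] at this
        rw [hLF x (k+1) hk w hw]
        exact this.congr_of_eventuallyEq (hev x k hk.le w hw)
      have hdiffn : ∀ x, ∀ w ∈ Ω i, DifferentiableAt ℂ (fun w => L x (F n w)) w := by
        intro x w hw
        have := h2 _ (hz x w hw) _ (hα x n le_rfl) i (by simp)
        simp only [Function.update_idem, Function.update_self] at this
        exact this.congr_of_eventuallyEq (hev x n le_rfl w hw)
      have hFd : ∀ k ≤ n, DifferentiableOn ℂ (F k) (Ω i) := by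
        intro k hk
        refine diff_of_sep (hΩo i) ((hFc k hk).mono subset_closure) L hsep ?_
        intro x w hw
        rcases hk.lt_or_eq with h | rfl
        · exact (hder x k h w hw).differentiableAt.differentiableWithinAt
        · exact (hdiffn x w hw).differentiableWithinAt
      have hFder : ∀ k < n, ∀ z ∈ Ω i, HasDerivAt (F k) (F (k+1) z) z := by
        intro k hk z hz
        have hd := ((hFd k hk.le z hz).differentiableAt ((hΩo i).mem_nhds hz)).hasDerivAt
        suffices h0 : F (k+1) z = deriv (F k) z by rw [h0]; exact hd
        rw [← sub_eq_zero]
        apply hsep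
        intro x
        rw [map_sub, sub_eq_zero]
        exact (hder x k hk z hz).unique ((L x).hasFDerivAt.comp_hasDerivAt z hd)
      have happ := hJA i (S Ω n s) F hFc hFder (hFd n le_rfl)
      have hcl : IsClosed (S Ω n (insert i s) : Set C(Z Ω n, ℂ)) :=
        Submodule.isClosed_topologicalClosure _
      change slice Ω n J (insert i s) b ∈ (S Ω n (insert i s) : Set C(Z Ω n, ℂ))
      rw [← hcl.closure_eq, Metric.mem_closure_iff]
      intro ε hε
      obtain ⟨p, hp, hpe⟩ := happ (ε/2) (by positivity)
      obtain ⟨e, he, hex⟩ := lift_jetpoly Ω n hi hp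
      refine ⟨e, he, ?_⟩
      refine lt_of_le_of_lt ?_ (half_lt_self hε)
      rw [ContinuousMap.dist_le (by positivity)]
      intro x
      rw [dist_eq_norm, hex, slice_apply, Finset.piecewise_insert,
        Finset.update_piecewise_of_notMem _ _ _ hi]
      have hk : ((x i).2 : ℕ) ≤ n := Nat.le_of_lt_succ (x i).2.2
      have h3 := hpe _ hk _ (x i).1.2
      have h4 : J (s.piecewise x (Function.update b i (x i))) =
          (F ((x i).2 : ℕ) ((x i).1 : ℂ) : C(Z Ω n, ℂ)) x := by
        rw [hF _ hk _ (x i).1.2]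
        rfl
      rw [h4]
      refine le_trans ?_ h3.le
      exact ContinuousMap.norm_coe_le_norm
        ((F ((x i).2 : ℕ) ((x i).1 : ℂ) - p ((x i).2 : ℕ) ((x i).1 : ℂ) : S Ω n s) : C(Z Ω n, ℂ)) x
  by_cases hne : Nonempty (Z Ω n)
  · obtain ⟨b⟩ := hne
    have := key Finset.univ b
    convert this using 1
    ext x
    simp [slice_apply]
  · have : J = 0 := by ext x; exact (hne ⟨x⟩).elim
    rw [this]; exact zero_mem _

end prod
end Merg

namespace Merg
open Set Filter Topology MeasureTheory Complex

variable {m : ℕ}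

lemma mixedDeriv_cons (i : Fin m) (l : List (Fin m)) (u : (Fin m → ℂ) → ℂ) :
    mixedDeriv (i :: l) u = partialDeriv i (mixedDeriv l u) := rfl

lemma hasDerivAt_eval (P : MvPolynomial (Fin m) ℂ) (i : Fin m) (z : Fin m → ℂ) :
    HasDerivAt (fun w => MvPolynomial.eval (Function.update z i w) P)
      (MvPolynomial.eval z (MvPolynomial.pderiv i P)) (z i) := by
  induction P using MvPolynomial.induction_on with
  | C a => simpa using hasDerivAt_const (z i) a
  | add p q hp hq =>
    simp only [map_add]
    exact hp.add hq
  | mul_X p j hp =>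
    have hX : HasDerivAt (fun w => Function.update z i w j) (if j = i then 1 else 0) (z i) := by
      by_cases h : j = i
      · subst h; simpa using hasDerivAt_id' (z j)
      · simpa [h] using hasDerivAt_const (z i) (z j)
    have h := hp.mul hX
    have hfun : (fun w => MvPolynomial.eval (Function.update z i w) (p * MvPolynomial.X j)) =
        (fun w => MvPolynomial.eval (Function.update z i w) p) *
          fun w => Function.update z i w j := by
      funext w; simp
    rw [hfun]
    refine h.congr_deriv ?_
    simp only [Function.update_eq_self, Derivation.leibniz, smul_eq_mul, map_add, map_mul,
      MvPolynomial.eval_X, MvPolynomial.pderiv_X]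
    by_cases h : j = i
    · subst h; simp; ring
    · rw [Pi.single_apply]
      simp [h]; ring

noncomputable def D (l : List (Fin m)) (P : MvPolynomial (Fin m) ℂ) : MvPolynomial (Fin m) ℂ :=
  l.foldr (fun i Q => MvPolynomial.pderiv i Q) P

lemma D_cons (i : Fin m) (l : List (Fin m)) (P : MvPolynomial (Fin m) ℂ) :
    D (i :: l) P = MvPolynomial.pderiv i (D l P) := rfl

lemma mixedDeriv_eval (l : List (Fin m)) (P : MvPolynomial (Fin m) ℂ) :
    mixedDeriv l (fun w => MvPolynomial.eval w P) = fun z => MvPolynomial.eval z (D l P) := by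
  induction l with
  | nil => rfl
  | cons i l ih =>
    rw [mixedDeriv_cons, ih]
    funext z
    exact (hasDerivAt_eval (D l P) i z).deriv

lemma D_add (l : List (Fin m)) (P Q : MvPolynomial (Fin m) ℂ) : D l (P + Q) = D l P + D l Q := by
  induction l with
  | nil => rfl
  | cons i l ih => simp only [D_cons, ih, map_add]

lemma D_smul (l : List (Fin m)) (a : ℂ) (P : MvPolynomial (Fin m) ℂ) :
    D l (a • P) = a • D l P := by
  induction l with
  | nil => rfl
  | cons i l ih => simp only [D_cons, ih, Derivation.map_smul]

lemma pderiv_comm (i j : Fin m) (P : MvPolynomial (Fin m) ℂ) :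
    MvPolynomial.pderiv i (MvPolynomial.pderiv j P) =
      MvPolynomial.pderiv j (MvPolynomial.pderiv i P) := by
  have : ⁅(MvPolynomial.pderiv i : Derivation ℂ (MvPolynomial (Fin m) ℂ) (MvPolynomial (Fin m) ℂ)),
      (MvPolynomial.pderiv j : Derivation ℂ (MvPolynomial (Fin m) ℂ) (MvPolynomial (Fin m) ℂ))⁆
      = 0 := by
    apply MvPolynomial.derivation_ext
    intro k
    rw [Derivation.commutator_apply, MvPolynomial.pderiv_X, MvPolynomial.pderiv_X,
      Pi.single_apply, Pi.single_apply]
    split_ifs <;> simp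
  have h := congrArg (fun d => d P) this
  simp only [Derivation.commutator_apply] at h
  exact sub_eq_zero.1 h

lemma D_perm {l l' : List (Fin m)} (h : l.Perm l') (P : MvPolynomial (Fin m) ℂ) :
    D l P = D l' P := by
  induction h with
  | nil => rfl
  | cons x _ ih => rw [D_cons, D_cons, ih]
  | swap x y l => simp only [D_cons]; exact pderiv_comm _ _ _
  | trans _ _ h1 h2 => exact h1.trans h2

lemma mixedDeriv_prod (q : Fin m → Polynomial ℂ) (l : List (Fin m)) :
    mixedDeriv l (fun w => ∏ i, (q i).eval (w i)) =
      fun z => ∏ i, (Polynomial.derivative^[l.count i] (q i)).eval (z i) := by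
  induction l with
  | nil => simp [mixedDeriv]
  | cons i l ih =>
    rw [mixedDeriv_cons, ih]
    funext z
    unfold partialDeriv
    have h1 : ∀ w, ∏ j, (Polynomial.derivative^[l.count j] (q j)).eval (Function.update z i w j) =
        (Polynomial.derivative^[l.count i] (q i)).eval w *
        ∏ j ∈ Finset.univ.erase i, (Polynomial.derivative^[l.count j] (q j)).eval (z j) := by
      intro w
      rw [← Finset.mul_prod_erase _ _ (Finset.mem_univ i), Function.update_self]
      congr 1
      apply Finset.prod_congr rfl
      intro j hj
      rw [Function.update_of_ne (Finset.ne_of_mem_erase hj)]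
    simp only [h1]
    rw [((Polynomial.hasDerivAt _ (z i)).mul_const _).deriv,
      ← Finset.mul_prod_erase _ _ (Finset.mem_univ i)]
    congr 1
    · rw [List.count_cons_self, Function.iterate_succ_apply']
    · apply Finset.prod_congr rfl
      intro j hj
      rw [List.count_cons_of_ne (Finset.ne_of_mem_erase hj).symm]

lemma T_poly {Ω : Fin m → Set ℂ} {n : ℕ} {e : C(Z Ω n, ℂ)} (he : e ∈ T Ω n Finset.univ) :
    ∃ P : MvPolynomial (Fin m) ℂ, ∀ (l : List (Fin m)) (x : Z Ω n),
      (∀ i, ((x i).2 : ℕ) = l.count i) → e x =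
        mixedDeriv l (fun w => MvPolynomial.eval w P) (fun i => ((x i).1 : ℂ)) := by
  simp only [mixedDeriv_eval]
  induction he using Submodule.span_induction with
  | mem e h =>
    obtain ⟨q, rfl⟩ := h
    refine ⟨∏ i, Polynomial.aeval (MvPolynomial.X i) (q i), ?_⟩
    intro l x hx
    have h1 := congrFun (mixedDeriv_eval l (∏ i, Polynomial.aeval (MvPolynomial.X i) (q i)))
      (fun i => ((x i).1 : ℂ))
    rw [← h1]
    have h2 : (fun w : Fin m → ℂ => MvPolynomial.eval w
        (∏ i, Polynomial.aeval (MvPolynomial.X i) (q i))) = fun w => ∏ i, (q i).eval (w i) := by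
      funext w
      rw [map_prod]
      apply Finset.prod_congr rfl
      intro i _
      rw [← MvPolynomial.coe_aeval_eq_eval]
      have := Polynomial.aeval_algHom_apply (MvPolynomial.aeval (R := ℂ) w) (MvPolynomial.X i) (q i)
      simp only [MvPolynomial.aeval_X] at this
      rw [Polynomial.coe_aeval_eq_eval] at this
      exact this.symm
    rw [h2, mixedDeriv_prod]
    simp only [ContinuousMap.coe_prod, Finset.prod_apply]
    apply Finset.prod_congr rfl
    intro i _
    rw [← hx i]; rfl
  | zero => exact ⟨0, fun l x _ => by
      have := D_smul l 0 0
      simp only [zero_smul] at this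
      rw [this]; simp⟩
  | add x y _ _ hx hy =>
    obtain ⟨P, hP⟩ := hx
    obtain ⟨Q, hQ⟩ := hy
    exact ⟨P + Q, fun l x h => by rw [D_add]; simp [hP l x h, hQ l x h]⟩
  | smul a x _ hx =>
    obtain ⟨P, hP⟩ := hx
    exact ⟨a • P, fun l x h => by rw [D_smul]; simp [hP l x h]⟩

lemma compl_closedBall_connected (c : ℂ) (r : ℝ) :
    IsConnected (Metric.closedBall c r)ᶜ := by
  have h : (Metric.closedBall c r)ᶜ =
      (fun p : ℝ × ℝ => c + p.1 * Complex.exp (p.2 * I)) '' (Ioi r ×ˢ univ) := by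
    ext w
    simp only [mem_compl_iff, Metric.mem_closedBall, not_le, mem_image, mem_prod, mem_Ioi, mem_univ,
      and_true, Prod.exists, dist_eq_norm]
    constructor
    · intro h
      exact ⟨_, arg (w - c), h, by rw [norm_mul_exp_arg_mul_I]; ring⟩
    · rintro ⟨a, b, ha, rfl⟩
      simp [norm_exp_ofReal_mul_I]
      exact lt_of_lt_of_le ha (le_abs_self a)
  rw [h]
  apply IsConnected.image
  · exact isConnected_Ioi.prod isConnected_univ
  · fun_prop

lemma jetApprox_ball (c : ℂ) {r : ℝ} (hr : 0 < r) : JetApprox (Metric.ball c r) 0 := by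
  intro E _ _ _ F hc _ hd ε hε
  have hcl : closure (Metric.ball c r) = Metric.closedBall c r := closure_ball c hr.ne'
  have := mergelyan (isCompact_closedBall c r) (compl_closedBall_connected c r)
    (by have := hc 0 le_rfl; rwa [hcl] at this) (by rw [interior_closedBall c hr.ne']; exact hd)
  obtain ⟨p, hp, h⟩ := this ε hε
  rw [hcl]
  exact ⟨p, hp, fun k hk z hz => by obtain rfl : k = 0 := by omega
                                    exact h z hz⟩

end Merg

namespace Merg
open Set Filter Topology MeasureTheory Complex

variable {m : ℕ}

lemma update_mem_ball {z0 z : Fin m → ℂ} {r s : ℝ} (hz : z ∈ Metric.ball z0 r) {i : Fin m} {w : ℂ}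
    (hw : dist w (z i) < s) : Function.update z i w ∈ Metric.ball z0 (r + s) := by
  have hs : 0 < s := lt_of_le_of_lt dist_nonneg hw
  have hr : 0 < r := lt_of_le_of_lt dist_nonneg (Metric.mem_ball.1 hz)
  rw [Metric.mem_ball] at *
  rw [dist_pi_lt_iff (by positivity)] at *
  intro j
  have hj := hz j
  by_cases h : j = i
  · subst h
    rw [Function.update_self]
    linarith [dist_triangle w (z j) (z0 j)]
  · rw [Function.update_of_ne h]; linarith

lemma diff_of_unif {u : (Fin m → ℂ) → ℂ} {P : ℕ → MvPolynomial (Fin m) ℂ} {z0 : Fin m → ℂ} {R : ℝ}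
    (h : TendstoUniformlyOn (fun k z => MvPolynomial.eval z (P k)) u atTop (Metric.ball z0 (R + R)))
    {z : Fin m → ℂ} (hz : z ∈ Metric.ball z0 R) (i : Fin m) :
    DifferentiableOn ℂ (fun w => u (Function.update z i w)) (Metric.ball (z i) R) := by
  have h1 : TendstoUniformlyOn (fun k w => MvPolynomial.eval (Function.update z i w) (P k))
      (fun w => u (Function.update z i w)) atTop (Metric.ball (z i) R) := by
    have := h.comp (Function.update z i)
    refine this.mono ?_
    intro w hw
    exact update_mem_ball hz hw
  refine h1.tendstoLocallyUniformlyOn.differentiableOn (Eventually.of_forall fun k => ?_)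
    Metric.isOpen_ball
  intro w _
  have := hasDerivAt_eval (P k) i (Function.update z i w)
  simp only [Function.update_idem, Function.update_self] at this
  exact this.differentiableAt.differentiableWithinAt

lemma unif_partial {u : (Fin m → ℂ) → ℂ} {P : ℕ → MvPolynomial (Fin m) ℂ} {z0 : Fin m → ℂ} {R : ℝ}
    (hR : 0 < R)
    (h : TendstoUniformlyOn (fun k z => MvPolynomial.eval z (P k)) u atTop (Metric.ball z0 (R + R)))
    (i : Fin m) :
    TendstoUniformlyOn (fun k z => MvPolynomial.eval z (MvPolynomial.pderiv i (P k)))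
      (partialDeriv i u) atTop (Metric.ball z0 R) := by
  rw [Metric.tendstoUniformlyOn_iff] at *
  intro ε hε
  have h' := Metric.tendstoUniformlyOn_iff.2 h
  filter_upwards [h (ε / 2 * (R / 2)) (by positivity)] with k hk z hz
  have hu := diff_of_unif h' hz i
  have hp := hasDerivAt_eval (P k) i z
  have hu1 : DifferentiableAt ℂ (fun w => u (Function.update z i w)) (z i) :=
    hu.differentiableAt (Metric.ball_mem_nhds _ hR)
  have hpd : Differentiable ℂ (fun w => MvPolynomial.eval (Function.update z i w) (P k)) := by
    intro w
    have := hasDerivAt_eval (P k) i (Function.update z i w)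
    simp only [Function.update_idem, Function.update_self] at this
    exact this.differentiableAt
  have hder : deriv (fun w => u (Function.update z i w) -
      MvPolynomial.eval (Function.update z i w) (P k)) (z i) =
      partialDeriv i u z - MvPolynomial.eval z (MvPolynomial.pderiv i (P k)) := by
    exact (hu1.hasDerivAt.sub hp).deriv
  rw [dist_eq_norm, ← hder]
  have hsub : Metric.closedBall (z i) (R/2) ⊆ Metric.ball (z i) R :=
    Metric.closedBall_subset_ball (by linarith)
  have := Complex.norm_deriv_le_of_forall_mem_sphere_norm_le (f := fun w =>
    u (Function.update z i w) - MvPolynomial.eval (Function.update z i w) (P k))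
    (c := z i) (R := R/2) (C := ε / 2 * (R / 2)) (by positivity) ?_ ?_
  · refine lt_of_le_of_lt this ?_
    rw [mul_div_cancel_right₀ _ (by positivity)]
    linarith
  · apply DifferentiableOn.diffContOnCl
    rw [closure_ball _ (by positivity)]
    exact (hu.mono hsub).sub hpd.differentiableOn
  · intro w hw
    rw [← dist_eq_norm]
    refine (hk _ (update_mem_ball hz ?_)).le
    exact hsub (Metric.sphere_subset_closedBall hw)

lemma unif_mixed {u : (Fin m → ℂ) → ℂ} {P : ℕ → MvPolynomial (Fin m) ℂ} {z0 : Fin m → ℂ} {R : ℝ}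
    (hR : 0 < R)
    (h : TendstoUniformlyOn (fun k z => MvPolynomial.eval z (P k)) u atTop (Metric.ball z0 R))
    (l : List (Fin m)) : ∃ r > 0,
    TendstoUniformlyOn (fun k z => MvPolynomial.eval z (D l (P k)))
      (mixedDeriv l u) atTop (Metric.ball z0 r) := by
  induction l with
  | nil => exact ⟨R, hR, h⟩
  | cons i l ih =>
    obtain ⟨r, hr, hl⟩ := ih
    refine ⟨r/2, by positivity, ?_⟩
    rw [← add_halves r] at hl
    exact unif_partial (by positivity) hl i

lemma local_poly {U : Set (Fin m → ℂ)} (hU : IsOpen U) {f : (Fin m → ℂ) → ℂ}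
    (hfc : ContinuousOn f U)
    (hfd : ∀ z ∈ U, ∀ i : Fin m,
      DifferentiableAt ℂ (fun w => f (Function.update z i w)) (z i)) {z0 : Fin m → ℂ} (hz0 : z0 ∈ U) :
    ∃ R > 0, ∃ P : ℕ → MvPolynomial (Fin m) ℂ,
    TendstoUniformlyOn (fun k z => MvPolynomial.eval z (P k)) f atTop (Metric.ball z0 R) := by
  obtain ⟨R, hR, hball⟩ := Metric.nhds_basis_closedBall.mem_iff.1 (hU.mem_nhds hz0)
  refine ⟨R, hR, ?_⟩
  let Ω : Fin m → Set ℂ := fun i => Metric.ball (z0 i) R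
  have hcl : ∀ i, closure (Ω i) = Metric.closedBall (z0 i) R := fun i => closure_ball _ hR.ne'
  have : ∀ i, CompactSpace (closure (Ω i)) := by
    intro i
    rw [hcl i]
    exact isCompact_iff_compactSpace.1 (isCompact_closedBall _ _)
  have hmem : ∀ z : Fin m → ℂ, (∀ i, z i ∈ closure (Ω i)) → z ∈ U := by
    intro z hz
    apply hball
    rw [Metric.mem_closedBall, dist_pi_le_iff hR.le]
    intro i
    have := hz i
    rwa [hcl i] at this
  let J : C(Z Ω 0, ℂ) := ⟨fun x => f (fun i => ((x i).1 : ℂ)), by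
    refine hfc.comp_continuous (by fun_prop) ?_
    intro x
    exact hmem _ (fun i => (x i).1.2)⟩
  have hJS : J ∈ S Ω 0 Finset.univ := by
    refine prod_approx Ω 0 (fun i => Metric.isOpen_ball) (fun i => jetApprox_ball _ hR)
      (fun z _ => f z) J (fun x => rfl) ?_ ?_
    · intro z hz α _ i hi
      exact absurd hi (Nat.not_lt_zero _)
    · intro z hz α _ i _
      exact hfd z (hmem z fun i => subset_closure (hz i)) i
  have hex : ∀ k : ℕ, ∃ P : MvPolynomial (Fin m) ℂ, ∀ z ∈ Metric.ball z0 R,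
      dist (f z) (MvPolynomial.eval z P) < 1 / ((k : ℝ) + 1) := by
    intro k
    obtain ⟨e, he, hd⟩ := Metric.mem_closure_iff.1 hJS (1 / ((k : ℝ) + 1)) (by positivity)
    obtain ⟨P, hP⟩ := T_poly he
    refine ⟨P, ?_⟩
    intro z hz
    rw [Metric.mem_ball, dist_pi_lt_iff hR] at hz
    let x : Z Ω 0 := fun i => (⟨z i, subset_closure (hz i)⟩, 0)
    have h1 := hP [] x (by intro i; simp [x])
    have h2 : e x = MvPolynomial.eval z P := h1
    rw [← h2]
    have h3 : f z = J x := rfl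
    rw [h3]
    exact lt_of_le_of_lt (ContinuousMap.dist_apply_le_dist x) hd
  choose P hP using hex
  refine ⟨P, ?_⟩
  rw [Metric.tendstoUniformlyOn_iff]
  intro ε hε
  obtain ⟨N, hN⟩ := exists_nat_one_div_lt hε
  filter_upwards [eventually_ge_atTop N] with k hk z hz
  refine (hP k z hz).trans (lt_of_le_of_lt ?_ hN)
  gcongr

lemma interior_facts {U : Set (Fin m → ℂ)} (hU : IsOpen U) {f : (Fin m → ℂ) → ℂ}
    (hfc : ContinuousOn f U)
    (hfd : ∀ z ∈ U, ∀ i : Fin m,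
      DifferentiableAt ℂ (fun w => f (Function.update z i w)) (z i)) {z0 : Fin m → ℂ} (hz0 : z0 ∈ U) :
    (∀ l i, HasDerivAt (fun w => mixedDeriv l f (Function.update z0 i w))
      (mixedDeriv (i :: l) f z0) (z0 i)) ∧
    ∀ l l', l.Perm l' → mixedDeriv l f z0 = mixedDeriv l' f z0 := by
  obtain ⟨R, hR, P, hP⟩ := local_poly hU hfc hfd hz0
  constructor
  · intro l i
    obtain ⟨r, hr, hl⟩ := unif_mixed hR hP l
    rw [← add_halves r] at hl
    have := diff_of_unif hl (Metric.mem_ball_self (by positivity)) i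
    exact (this.differentiableAt (Metric.ball_mem_nhds _ (by positivity))).hasDerivAt
  · intro l l' hll
    obtain ⟨r, hr, hl⟩ := unif_mixed hR hP l
    obtain ⟨r', hr', hl'⟩ := unif_mixed hR hP l'
    have h1 := hl.tendsto_at (Metric.mem_ball_self hr)
    have h2 := hl'.tendsto_at (Metric.mem_ball_self hr')
    simp only [D_perm hll] at h1
    exact tendsto_nhds_unique h1 h2

def canon (α : Fin m → ℕ) : List (Fin m) :=
  (List.finRange m).flatMap (fun i => List.replicate (α i) i)

lemma count_canon (α : Fin m → ℕ) (i : Fin m) : (canon α).count i = α i := by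
  unfold canon
  rw [List.count_flatMap]
  have : (List.count i ∘ fun i => List.replicate (α i) i) = fun j => if j = i then α i else 0 := by
    funext j
    by_cases h : j = i
    · subst h; simp
    · simp [List.count_replicate, h]
  rw [this]
  rw [← List.ofFn_eq_map, List.sum_ofFn]
  simp

end Merg

theorem stmt6 (m : ℕ) (Ω : Fin m → Set ℂ)
    (hΩo : ∀ i, IsOpen (Ω i)) (hΩc : ∀ i, IsConnected (Ω i))
    (hΩb : ∀ i, Bornology.IsBounded (Ω i))
    (hreg : ∀ i, interior (closure (Ω i)) = Ω i)
    (hcc : ∀ i, IsConnected (closure (Ω i))ᶜ)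
    (M : ℝ) (hjoin : ∀ i, ∀ z ∈ Ω i, ∀ w ∈ Ω i, JoinedLe (Ω i) M z w)
    (f : (Fin m → ℂ) → ℂ)
    (hfc : ContinuousOn f (Set.pi Set.univ fun i => closure (Ω i)))
    (hfd : ∀ z ∈ Set.pi Set.univ Ω, ∀ i : Fin m,
      DifferentiableAt ℂ (fun w => f (Function.update z i w)) (z i))
    (g : List (Fin m) → (Fin m → ℂ) → ℂ)
    (hgnil : ∀ z ∈ Set.pi Set.univ fun i => closure (Ω i), g [] z = f z)
    (hgc : ∀ l, ContinuousOn (g l) (Set.pi Set.univ fun i => closure (Ω i)))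
    (hgd : ∀ l, ∀ z ∈ Set.pi Set.univ Ω, g l z = mixedDeriv l f z) :
    ∀ n : ℕ, ∀ ε > 0, ∃ P : MvPolynomial (Fin m) ℂ,
      ∀ l : List (Fin m), (∀ i, l.count i ≤ n) →
        ∀ z ∈ Set.pi Set.univ fun i => closure (Ω i),
          ‖mixedDeriv l (fun w => MvPolynomial.eval w P) z - g l z‖ < ε := by
  intro n ε hε
  have hU : IsOpen (Set.pi Set.univ Ω) := isOpen_set_pi Set.finite_univ (fun i _ => hΩo i)
  have hsub : Set.pi Set.univ Ω ⊆ Set.pi Set.univ fun i => closure (Ω i) :=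
    Set.pi_mono fun i _ => subset_closure
  have hfacts := fun z (hz : z ∈ Set.pi Set.univ Ω) =>
    Merg.interior_facts hU (hfc.mono hsub) hfd hz
  have hcomp : ∀ i, CompactSpace (closure (Ω i)) := fun i =>
    isCompact_iff_compactSpace.1 (hΩb i).isCompact_closure
  have hperm : ∀ l l' : List (Fin m), l.Perm l' →
      ∀ z ∈ Set.pi Set.univ fun i => closure (Ω i), g l z = g l' z := by
    intro l l' hll
    have h1 : Set.EqOn (g l) (g l') (Set.pi Set.univ Ω) := fun z hz => by
      rw [hgd l z hz, hgd l' z hz]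
      exact (hfacts z hz).2 l l' hll
    refine h1.of_subset_closure (hgc l) (hgc l') hsub ?_
    rw [closure_pi_set]
  let J : C(Merg.Z Ω n, ℂ) :=
    ⟨fun x => g (Merg.canon fun i => ((x i).2 : ℕ)) (fun i => ((x i).1 : ℂ)), by
    have h1 : Continuous (fun y : ((i : Fin m) → closure (Ω i)) × (Fin m → Fin (n+1)) =>
        g (Merg.canon fun i => (y.2 i : ℕ)) (fun i => (y.1 i : ℂ))) := by
      rw [continuous_prod_of_discrete_right]
      intro b
      refine ContinuousOn.comp_continuous (f := fun y : (i : Fin m) → closure (Ω i) =>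
        fun i => (y i : ℂ)) (hgc (Merg.canon fun i => (b i : ℕ))) ?_ ?_
      · fun_prop
      · intro x i _
        exact (x i).2
    exact h1.comp (f := fun x : Merg.Z Ω n => ((fun i => (x i).1), (fun i => (x i).2)))
      (by fun_prop)⟩
  have hev : ∀ l, ∀ z ∈ Set.pi Set.univ Ω, ∀ i,
      HasDerivAt (fun w => g l (Function.update z i w)) (g (i :: l) z) (z i) := by
    intro l z hz i
    rw [hgd _ z hz]
    refine ((hfacts z hz).1 l i).congr_of_eventuallyEq ?_
    filter_upwards [(hΩo i).mem_nhds (hz i trivial)] with w hw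
    apply hgd
    intro j _
    by_cases h : j = i
    · subst h; simpa using hw
    · rw [Function.update_of_ne h]; exact hz j trivial
  have hJS : J ∈ Merg.S Ω n Finset.univ := by
    refine Merg.prod_approx Ω n hΩo (fun i => ?_) (fun z α => g (Merg.canon α) z) J
      (fun x => rfl) ?_ ?_
    · intro E _ _ _
      exact Merg.jet_approx (hΩo i) (hΩc i).nonempty (hΩb i) (hreg i) (hcc i) (hjoin i) n
    · intro z hz α _ i _
      have := hev (Merg.canon α) z (fun i _ => hz i) i
      rwa [hperm (i :: Merg.canon α) (Merg.canon (Function.update α i (α i + 1))) _ z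
        (fun i _ => subset_closure (hz i))] at this
      rw [List.perm_iff_count]
      intro j
      rw [Merg.count_canon]
      by_cases h : j = i
      · subst h; simp [Merg.count_canon]
      · rw [List.count_cons_of_ne (Ne.symm h), Merg.count_canon, Function.update_of_ne h]
    · intro z hz α _ i _
      exact (hev (Merg.canon α) z (fun i _ => hz i) i).differentiableAt
  obtain ⟨e, he, hd⟩ := Metric.mem_closure_iff.1 hJS ε hε
  obtain ⟨P, hP⟩ := Merg.T_poly he
  refine ⟨P, fun l hl z hz => ?_⟩
  let x : Merg.Z Ω n := fun i => (⟨z i, hz i trivial⟩, ⟨l.count i, Nat.lt_succ_of_le (hl i)⟩)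
  have h1 : e x = mixedDeriv l (fun w => MvPolynomial.eval w P) z := hP l x (fun i => rfl)
  have h2 : J x = g l z := by
    refine hperm _ _ ?_ z hz
    rw [List.perm_iff_count]
    intro j
    rw [Merg.count_canon]
  rw [← h1, ← h2, ← dist_eq_norm, dist_comm]
  exact lt_of_le_of_lt (ContinuousMap.dist_apply_le_dist x) hd
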